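/- arXiv:1909.00150 — 4 statements merged into one kernel-verified Lean document; each statement's English description precedes it below -/
import Mathlib

section
/- Fix an integer δ ≥ 3. There exists Δ₀ such that the following holds for every graph G of minimum degree δ and maximum degree Δ ≥ Δ₀. Define S = {v ∈ V(G) : d(v) ≤ Δ^{2/3}(log Δ)^4} and B = {v ∈ V(G) : d(v) > Δ^{2/3}(log Δ)^4}, let S₀ = {v ∈ S : v has no neighbour in S} and S₁ = {v ∈ S : v has exactly one neighbour in S}, and let H be the bipartite subgraph of G induced by all edges between S₀ ∪ S₁ and B. Suppose G' is a subgraph of G minus the edges of G[S] and H' is a subgraph of both G' and H such that: every v ∈ S₀ has degree exactly 2 in H'; every v ∈ S₁ has degree exactly 1 in H'; and every v ∈ B has degree at most d(v)·(2/δ)·(1 + δ/Δ^{1/3}) in G'. Let r = ⌈(3/δ)·Δ·(1 + δ/Δ^{1/3})⌉. Then there is a proper edge colouring of G' using at most 2r colours from the set {1, 2, …, 3r} such that: (i) for every u ∈ B, the colours of any two edges incident with u in G' differ by at least 2; (ii) for every v ∈ S₀, some two consecutive integers both appear as colours of edges incident with v in G'; (iii) for every v ∈ S₁ and every edge uv of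 G[S], some colour appearing on an edge of G' incident with v does not appear on any edge of G' incident with u. -/
/-!
Split the colours into `r` classes, the class `i < r` consisting of `3 * i + 1` and `3 * i + 2`.
Colours from different classes differ by at least 2, and only `2 * r` colours are involved, so it
suffices to choose a class for each edge of `G'` such that

* at each vertex of `B` all classes are distinct;
* at each vertex of `S` all classes are distinct, except that the two `H'`-edges at a vertex of `S₀`
  share a class, one of them receiving `3 * i + 1` and the other `3 * i + 2`;
* for `v ∈ S₁` the class of the `H'`-edge at `v` does not occur at the `S`-neighbour of `v`.

The edges inside `B` and the `H'`-edges at `S₀` come first. Replacing the pair `va`, `vb` of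
`H'`-edges at each `v ∈ S₀` by a single edge `ab` produces a loopless multigraph on `B` whose maximum
degree is at most `D = ⌊(2/δ) Δ (1 + δ/Δ^(1/3))⌋`. As `r ≥ 3D/2`, Shannon's theorem (`shannon`)
colours its edges with the `r` classes. It is proved by induction on the edges: if `xy` is
uncoloured, pick a colour missing at `x` and let `yz` be the edge of that colour at `y`. The missing
colours at `x`, `y`, `z` are too many to be pairwise disjoint, and a shared missing colour yields a
colouring that includes `xy`, after at most one Kempe change. That a Kempe component has at most two
ends is `exists_component`.

The remaining edges `vw` have `v ∈ S` and `w ∈ B` and are treated greedily (`greedy_extension`). At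
most `D - 1` classes are excluded by `w`, and at most `3T` by the edges at `v`, the edges at the
`S`-neighbour of `v` (if `v ∈ S₁`) and the `H'`-edges at the `S₁`-neighbours of `v`, where
`T = ⌊Δ^(2/3) (log Δ)^4⌋`. For large `Δ` the slack `r - D`, which is of
order `Δ`, is at least `3T`, so some class is always free.
-/

/-- The palette of a vertex `v` under an edge colouring `c` of `G`:
the set of colours appearing on edges incident with `v`. -/
def palette {V : Type*} (G : SimpleGraph V) (c : Sym2 V → ℕ) (v : V) : Set ℕ :=
  {n : ℕ | ∃ u : V, G.Adj v u ∧ c s(v, u) = n}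

/-- `c` is a proper edge colouring of `G`: adjacent edges receive distinct colours. -/
def IsProperEdgeColoring {V : Type*} (G : SimpleGraph V) (c : Sym2 V → ℕ) : Prop :=
  ∀ u v w : V, G.Adj u v → G.Adj u w → v ≠ w → c s(u, v) ≠ c s(u, w)

/-- `c` is an inclusion-free colouring of `G`: a proper edge colouring such that
for every edge `uv`, the palette of `u` is not contained in the palette of `v`. -/
def IsInclusionFree {V : Type*} (G : SimpleGraph V) (c : Sym2 V → ℕ) : Prop :=
  IsProperEdgeColoring G c ∧ ∀ u v : V, G.Adj u v → ¬ palette G c u ⊆ palette G c v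

/-- The inclusion chromatic index: the least number of colours admitting an
inclusion-free colouring of `G`. -/
noncomputable def inclusionChromaticIndex {V : Type*} (G : SimpleGraph V) : ℕ :=
  sInf {k : ℕ | ∃ c : Sym2 V → ℕ, IsInclusionFree G c ∧ ∀ e ∈ G.edgeSet, c e < k}

/-! ### Shannon's theorem -/

/-- A colouring `c` of the edges of a multigraph (edge type `E`, the edge `e` joining the two
vertices of `ends e`) that is proper on the set `A` of edges; its values off `A` are irrelevant. -/
def ProperOn {E V : Type*} (ends : E → Sym2 V) (A : Finset E) (c : E → ℕ) : Prop :=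
  ∀ e ∈ A, ∀ f ∈ A, e ≠ f → ∀ v, v ∈ ends e → v ∈ ends f → c e ≠ c f

/-- The colour `γ` is missing at the vertex `v`, with respect to the edges in `A`. -/
def Misses {E V : Type*} (ends : E → Sym2 V) (A : Finset E) (c : E → ℕ) (v : V) (γ : ℕ) : Prop :=
  ∀ e ∈ A, v ∈ ends e → c e ≠ γ

/-- The edges of one colour form a matching, encoded as the involution that exchanges the two ends
of each such edge and fixes all other vertices. -/
lemma exists_involution {E V : Type*} {ends : E → Sym2 V} {A : Finset E} {c : E → ℕ}
    (hc : ProperOn ends A c) (γ : ℕ) :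
    ∃ σ : Equiv.Perm V, σ * σ = 1 ∧ (∀ v, Misses ends A c v γ → σ v = v) ∧
      ∀ e ∈ A, c e = γ → ∀ a b, ends e = s(a, b) → σ a = b := by
  classical
  let f : V → V := fun v =>
    if h : ∃ e ∈ A, v ∈ ends e ∧ c e = γ then Sym2.Mem.other h.choose_spec.2.1 else v
  have hf1 : ∀ v, Misses ends A c v γ → f v = v := by
    intro v hv
    have : ¬ ∃ e ∈ A, v ∈ ends e ∧ c e = γ := by
      rintro ⟨e, he, hve, hce⟩
      exact hv e he hve hce
    simp only [f, dif_neg this]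
  have hf2 : ∀ e ∈ A, c e = γ → ∀ a b, ends e = s(a, b) → f a = b := by
    intro e he hce a b hab
    have hae : a ∈ ends e := by rw [hab]; exact Sym2.mem_mk_left a b
    have h : ∃ e ∈ A, a ∈ ends e ∧ c e = γ := ⟨e, he, hae, hce⟩
    have h1 : s(a, Sym2.Mem.other h.choose_spec.2.1) = ends h.choose := Sym2.other_spec _
    have h2 : h.choose = e := by
      by_contra hne
      exact hc _ h.choose_spec.1 _ he hne a h.choose_spec.2.1 hae
        (h.choose_spec.2.2.trans hce.symm)
    have h3 : f a = Sym2.Mem.other h.choose_spec.2.1 := by simp only [f, dif_pos h]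
    rw [← h3, h2, hab] at h1
    exact Sym2.congr_right.1 h1
  have hinv : Function.Involutive f := by
    intro v
    by_cases h : Misses ends A c v γ
    · rw [hf1 v h, hf1 v h]
    · simp only [Misses, not_forall, not_not] at h
      obtain ⟨e, he, hve, hce⟩ := h
      obtain ⟨b, hb⟩ := Sym2.mem_iff_exists.1 hve
      rw [hf2 e he hce v b hb]
      exact hf2 e he hce b v (hb.trans Sym2.eq_swap)
  refine ⟨hinv.toPerm, ?_, hf1, hf2⟩
  ext v
  exact hinv v

/-- Two involutions `σ` and `τ` move the points along alternating paths and cycles. A path has only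
two ends, so the component `C` of an end `x` cannot contain two further ends. With `ρ = τσ` the
component of `x` is `{ρ ^ k x}`; a fixed point `ρ ^ k x` of `σ` gives `ρ ^ (2k) x = x`, a fixed
point `ρ ^ l x` of `τ` gives `ρ ^ (2l - 1) x = x`, and both together force `ρ ^ k x = x`. -/
lemma exists_component {V : Type*} (σ τ : Equiv.Perm V) (hσ : σ * σ = 1) (hτ : τ * τ = 1)
    (x y z : V) (hx : σ x = x) (hy : τ y = y) (hz : σ z = z) (hxz : x ≠ z) :
    ∃ C : Set V, x ∈ C ∧ (∀ v ∈ C, σ v ∈ C) ∧ (∀ v ∈ C, τ v ∈ C) ∧ ¬ (y ∈ C ∧ z ∈ C) := by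
  have hσi : σ⁻¹ = σ := inv_eq_of_mul_eq_one_left hσ
  have hτi : τ⁻¹ = τ := inv_eq_of_mul_eq_one_left hτ
  set ρ : Equiv.Perm V := τ * σ with hρ
  have hconj : ∀ k : ℤ, σ * ρ ^ k = ρ ^ (-k) * σ := by
    intro k
    have h1 : σ * ρ * σ⁻¹ = ρ⁻¹ := by
      rw [hρ, mul_inv_rev, hσi, hτi, mul_assoc, mul_assoc, hσ, mul_one]
    have h2 : σ * ρ ^ k * σ⁻¹ = ρ ^ (-k) := by
      rw [← conj_zpow, h1, inv_zpow, zpow_neg]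
    rw [← h2, inv_mul_cancel_right]
  have hσk : ∀ k : ℤ, σ ((ρ ^ k) x) = (ρ ^ (-k)) x := by
    intro k
    have := congrArg (fun g : Equiv.Perm V => g x) (hconj k)
    simpa [Equiv.Perm.mul_apply, hx] using this
  have hτk : ∀ k : ℤ, τ ((ρ ^ k) x) = (ρ ^ (1 - k)) x := by
    intro k
    have h1 : τ = ρ * σ := by rw [hρ, mul_assoc, hσ, mul_one]
    have h2 : τ ((ρ ^ k) x) = ρ (σ ((ρ ^ k) x)) := by
      conv_lhs => rw [h1]
      rfl
    rw [h2, hσk, sub_eq_add_neg, zpow_add, zpow_one]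
    rfl
  have hstab : ∀ a b : ℤ, (ρ ^ a) x = (ρ ^ b) x →
      ρ ^ (a - b) ∈ MulAction.stabilizer (Equiv.Perm V) x := by
    intro a b hab
    rw [MulAction.mem_stabilizer_iff, Equiv.Perm.smul_def, sub_eq_neg_add, zpow_add,
      Equiv.Perm.mul_apply, hab, ← Equiv.Perm.mul_apply, ← zpow_add]
    simp
  refine ⟨Set.range fun k : ℤ => (ρ ^ k) x, ⟨0, by simp⟩, ?_, ?_, ?_⟩
  · rintro _ ⟨k, rfl⟩
    exact ⟨-k, (hσk k).symm⟩
  · rintro _ ⟨k, rfl⟩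
    exact ⟨1 - k, (hτk k).symm⟩
  · rintro ⟨⟨l, rfl⟩, ⟨k, rfl⟩⟩
    simp only at hy hz hxz
    rw [hτk] at hy
    rw [hσk] at hz
    have h1 := hstab _ _ hy
    have h2 := hstab _ _ hz
    -- `k = k * (1 - 2l) - l * (-2k)`
    have h3 := mul_mem (zpow_mem h1 k) (inv_mem (zpow_mem h2 l))
    rw [← zpow_mul, ← zpow_mul, ← zpow_neg, ← zpow_add] at h3
    have h4 : (1 - l - l) * k + -((-k - k) * l) = k := by ring
    rw [h4, MulAction.mem_stabilizer_iff] at h3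
    exact hxz h3.symm

/-- Kempe change: exchanging the colours `γ` and `β` on a union `C` of `γβ`-components. -/
lemma exists_kempe_change {E V : Type*} {ends : E → Sym2 V} {A : Finset E} {c : E → ℕ} {r γ β : ℕ}
    (hc : ProperOn ends A c) (hr : ∀ e ∈ A, c e < r) (hγ : γ < r) (hβ : β < r) (C : Set V)
    (hC : ∀ e ∈ A, c e = γ ∨ c e = β → ∀ u ∈ ends e, ∀ v ∈ ends e, u ∈ C → v ∈ C) :
    ∃ c' : E → ℕ, ProperOn ends A c' ∧ (∀ e ∈ A, c' e < r) ∧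
      (∀ e ∈ A, ∀ v ∈ ends e, v ∈ C → c' e = Equiv.swap γ β (c e)) ∧
      (∀ e ∈ A, ∀ v ∈ ends e, v ∉ C → c' e = c e) := by
  classical
  let c' : E → ℕ := fun e => if ∃ v ∈ ends e, v ∈ C then Equiv.swap γ β (c e) else c e
  have h1 : ∀ e ∈ A, ∀ v ∈ ends e, v ∈ C → c' e = Equiv.swap γ β (c e) := by
    intro e _ v hv hvC
    exact if_pos ⟨v, hv, hvC⟩
  have h2 : ∀ e ∈ A, ∀ v ∈ ends e, v ∉ C → c' e = c e := by
    intro e he v hv hvC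
    by_cases h : ∃ v ∈ ends e, v ∈ C
    · obtain ⟨u, hu, huC⟩ := h
      rw [h1 e he u hu huC]
      refine Equiv.swap_apply_of_ne_of_ne ?_ ?_
      · intro h; exact hvC (hC e he (Or.inl h) u hu v hv huC)
      · intro h; exact hvC (hC e he (Or.inr h) u hu v hv huC)
    · exact if_neg h
  refine ⟨c', ?_, ?_, h1, h2⟩
  · intro e he f hf hef v hve hvf
    by_cases hv : v ∈ C
    · rw [h1 e he v hve hv, h1 f hf v hvf hv]
      exact fun h => hc e he f hf hef v hve hvf ((Equiv.swap γ β).injective h)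
    · rw [h2 e he v hve hv, h2 f hf v hvf hv]
      exact hc e he f hf hef v hve hvf
  · intro e he
    have := hr e he
    simp only [c', Equiv.swap_apply_def]
    split_ifs <;> assumption

lemma extend_coloring {E V : Type*} [DecidableEq E] {ends : E → Sym2 V} {A : Finset E} {c : E → ℕ}
    {r κ : ℕ} (hc : ProperOn ends A c) (hr : ∀ e ∈ A, c e < r) (hκ : κ < r) {e : E} (heA : e ∉ A)
    (hm : ∀ v ∈ ends e, Misses ends A c v κ) :
    ∃ c' : E → ℕ, ProperOn ends (insert e A) c' ∧ ∀ f ∈ insert e A, c' f < r := by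
  have hne : ∀ f ∈ A, f ≠ e := fun f hf h => heA (h ▸ hf)
  refine ⟨Function.update c e κ, ?_, ?_⟩
  · intro f hf g hg hfg v hvf hvg
    rcases Finset.mem_insert.1 hf with hf1 | hf1 <;>
      rcases Finset.mem_insert.1 hg with hg1 | hg1
    · exact absurd (hf1.trans hg1.symm) hfg
    · subst hf1
      rw [Function.update_self, Function.update_of_ne (hne g hg1)]
      exact (hm v hvf g hg1 hvg).symm
    · subst hg1
      rw [Function.update_self, Function.update_of_ne (hne f hf1)]
      exact hm v hvg f hf1 hvf
    · rw [Function.update_of_ne (hne f hf1), Function.update_of_ne (hne g hg1)]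
      exact hc f hf1 g hg1 hfg v hvf hvg
  · intro f hf
    rcases Finset.mem_insert.1 hf with rfl | hf
    · rwa [Function.update_self]
    · rw [Function.update_of_ne (hne f hf)]
      exact hr f hf

/-- If the edge `f = yz` has the colour `α` missing at `x`, and some colour `κ` is missing at both
`y` and `z`, then recolouring `f` with `κ` frees `α` for the uncoloured edge `e = xy`. -/
lemma extend_coloring_shift {E V : Type*} [DecidableEq E] {ends : E → Sym2 V} {A : Finset E}
    {c : E → ℕ} {r κ : ℕ} (hc : ProperOn ends A c) (hr : ∀ e ∈ A, c e < r) (hκ : κ < r) {e f : E}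
    {x y z : V} (heA : e ∉ A) (hfA : f ∈ A) (he : ends e = s(x, y)) (hf : ends f = s(y, z))
    (hx : Misses ends A c x (c f)) (hy : Misses ends A c y κ) (hz : Misses ends A c z κ) :
    ∃ c' : E → ℕ, ProperOn ends (insert e A) c' ∧ ∀ f ∈ insert e A, c' f < r := by
  have hyf : y ∈ ends f := by rw [hf]; exact Sym2.mem_mk_left y z
  have hκf : κ ≠ c f := fun h => hy f hfA hyf h.symm
  have hκm : ∀ v ∈ ends f, Misses ends A c v κ := by
    intro v hv
    rw [hf, Sym2.mem_iff] at hv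
    rcases hv with rfl | rfl <;> assumption
  refine extend_coloring (c := Function.update c f κ) (κ := c f) ?_ ?_ (hr f hfA) heA ?_
  · intro g hg h hh hgh v hvg hvh
    by_cases hgf : g = f
    · subst hgf
      rw [Function.update_self, Function.update_of_ne hgh.symm]
      exact (hκm v hvg h hh hvh).symm
    · rw [Function.update_of_ne hgf]
      by_cases hhf : h = f
      · subst hhf
        rw [Function.update_self]
        exact hκm v hvh g hg hvg
      · rw [Function.update_of_ne hhf]
        exact hc g hg h hh hgh v hvg hvh
  · intro g hg
    by_cases hgf : g = f
    · rw [hgf, Function.update_self]; exact hκ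
    · rw [Function.update_of_ne hgf]; exact hr g hg
  · intro v hv g hg hvg
    by_cases hgf : g = f
    · rw [hgf, Function.update_self]; exact hκf
    · rw [Function.update_of_ne hgf]
      rw [he, Sym2.mem_iff] at hv
      rcases hv with rfl | rfl
      · exact hx g hg hvg
      · exact hc g hg f hfA hgf v hvg hyf

/-- Shannon's theorem: a loopless multigraph of maximum degree at most `D` has a proper edge
colouring with `r` colours whenever `r ≥ 3D/2`. -/
lemma shannon {E V : Type*} [DecidableEq E] [DecidableEq V] (ends : E → Sym2 V) (D r : ℕ)
    (hr : 3 * D ≤ 2 * r) (A : Finset E) (hloop : ∀ e ∈ A, ¬ (ends e).IsDiag)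
    (hdeg : ∀ v, (A.filter fun e => v ∈ ends e).card ≤ D) :
    ∃ c : E → ℕ, ProperOn ends A c ∧ ∀ e ∈ A, c e < r := by
  classical
  induction A using Finset.induction_on with
  | empty => exact ⟨fun _ => 0, by simp [ProperOn], by simp⟩
  | insert e A heA ih =>
    obtain ⟨c, hc, hcr⟩ := ih (fun f hf => hloop f (Finset.mem_insert_of_mem hf)) (fun v =>
      (Finset.card_le_card (Finset.filter_subset_filter _ (Finset.subset_insert e A))).trans
        (hdeg v))
    obtain ⟨⟨x, y⟩, hxy⟩ : ∃ p : V × V, ends e = s(p.1, p.2) := by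
      induction h : ends e with | _ a b => exact ⟨(a, b), rfl⟩
    simp only at hxy
    have hxe : x ∈ ends e := by rw [hxy]; exact Sym2.mem_mk_left x y
    have hye : y ∈ ends e := by rw [hxy]; exact Sym2.mem_mk_right x y
    have hxney : x ≠ y := by
      intro h
      exact hloop e (Finset.mem_insert_self e A) (by rw [hxy, h]; exact Sym2.mk_isDiag_iff.2 rfl)
    let miss : V → Finset ℕ := fun v => Finset.range r \ (A.filter fun e => v ∈ ends e).image c
    have hmiss : ∀ v γ, γ ∈ miss v ↔ γ < r ∧ Misses ends A c v γ := by
      intro v γ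
      simp only [miss, Finset.mem_sdiff, Finset.mem_range, Finset.mem_image, Finset.mem_filter,
        Misses]
      constructor
      · rintro ⟨h1, h2⟩
        exact ⟨h1, fun f hf hv h => h2 ⟨f, ⟨hf, hv⟩, h⟩⟩
      · rintro ⟨h1, h2⟩
        exact ⟨h1, fun ⟨f, ⟨hf, hv⟩, h⟩ => h2 f hf hv h⟩
    have hcard : ∀ v, r ≤ (miss v).card + (A.filter fun e => v ∈ ends e).card := by
      intro v
      have h1 := Finset.le_card_sdiff ((A.filter fun e => v ∈ ends e).image c) (Finset.range r)
      have h2 : ((A.filter fun e => v ∈ ends e).image c).card ≤ _ := Finset.card_image_le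
      rw [Finset.card_range] at h1
      have h3 : (miss v).card
        = (Finset.range r \ (A.filter fun e => v ∈ ends e).image c).card := rfl
      omega
    -- the ends of the uncoloured edge have degree at most `D - 1` among the coloured edges
    have hdegA : ∀ v ∈ ends e, (A.filter fun e => v ∈ ends e).card + 1 ≤ D := by
      intro v hv
      have h := hdeg v
      rw [Finset.filter_insert, if_pos hv, Finset.card_insert_of_notMem (by simp [heA])] at h
      exact h
    have hdegA' : ∀ v, (A.filter fun e => v ∈ ends e).card ≤ D := fun v =>
      (Finset.card_le_card (Finset.filter_subset_filter _ (Finset.subset_insert e A))).trans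
        (hdeg v)
    have hx1 := hcard x
    have hx2 := hdegA x hxe
    have hy1 := hcard y
    have hy2 := hdegA y hye
    by_cases hxyd : Disjoint (miss x) (miss y)
    swap
    · obtain ⟨κ, h1, h2⟩ := Finset.not_disjoint_iff.1 hxyd
      rw [hmiss] at h1 h2
      refine extend_coloring hc hcr h1.1 heA ?_
      intro v hv
      rw [hxy, Sym2.mem_iff] at hv
      rcases hv with rfl | rfl
      exacts [h1.2, h2.2]
    obtain ⟨α, hα⟩ : (miss x).Nonempty := Finset.card_pos.1 (by omega)
    obtain ⟨β, hβ⟩ : (miss y).Nonempty := Finset.card_pos.1 (by omega)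
    have hαy : α ∉ miss y := Finset.disjoint_left.1 hxyd hα
    have hβx : β ∉ miss x := Finset.disjoint_right.1 hxyd hβ
    obtain ⟨hαr, hαx⟩ := (hmiss x α).1 hα
    obtain ⟨hβr, hβy⟩ := (hmiss y β).1 hβ
    obtain ⟨f, hfA, hyf, hfα⟩ : ∃ f ∈ A, y ∈ ends f ∧ c f = α := by
      by_contra hcon
      push Not at hcon
      exact hαy ((hmiss y α).2 ⟨hαr, hcon⟩)
    subst hfα
    obtain ⟨z, hz⟩ := Sym2.mem_iff_exists.1 hyf
    have hzf : z ∈ ends f := by rw [hz]; exact Sym2.mem_mk_right y z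
    have hxz : x ≠ z := fun h => hαx f hfA (h ▸ hzf) rfl
    have hz1 := hcard z
    have hz2 := hdegA' z
    by_cases hyz : Disjoint (miss y) (miss z)
    swap
    · obtain ⟨κ, h1, h2⟩ := Finset.not_disjoint_iff.1 hyz
      rw [hmiss] at h1 h2
      exact extend_coloring_shift hc hcr h1.1 heA hfA hxy hz hαx h1.2 h2.2
    -- three sets of colours that are too large to be pairwise disjoint
    have hxzd : ¬ Disjoint (miss x) (miss z) := by
      intro hxzd
      have h1 : Disjoint (miss x ∪ miss y) (miss z) := Finset.disjoint_union_left.2 ⟨hxzd, hyz⟩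
      have h2 : (miss x ∪ miss y ∪ miss z).card ≤ (Finset.range r).card := by
        refine Finset.card_le_card fun γ hγ => ?_
        simp only [Finset.mem_union, hmiss] at hγ
        rw [Finset.mem_range]
        tauto
      rw [Finset.card_union_of_disjoint h1, Finset.card_union_of_disjoint hxyd,
        Finset.card_range] at h2
      omega
    obtain ⟨γ, hγx, hγz⟩ := Finset.not_disjoint_iff.1 hxzd
    obtain ⟨hγr, hγx⟩ := (hmiss x γ).1 hγx
    obtain ⟨_, hγz⟩ := (hmiss z γ).1 hγz
    obtain ⟨σ, hσ, hσm, hσe⟩ := exists_involution hc γ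
    obtain ⟨τ, hτ, hτm, hτe⟩ := exists_involution hc β
    obtain ⟨C, hxC, hCσ, hCτ, hyzC⟩ := exists_component σ τ hσ hτ x y z (hσm x hγx) (hτm y hβy)
      (hσm z hγz) hxz
    obtain ⟨c', hc', hcr', hin, hout⟩ := exists_kempe_change hc hcr hγr hβr C (by
      intro g hg hcg u hu v hv huC
      by_cases huv : u = v
      · exact huv ▸ huC
      have h : ends g = s(u, v) := (Sym2.mem_and_mem_iff huv).1 ⟨hu, hv⟩
      rcases hcg with hcg | hcg
      · rw [← hσe g hg hcg u v h]; exact hCσ u huC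
      · rw [← hτe g hg hcg u v h]; exact hCτ u huC)
    have hβx' : Misses ends A c' x β := by
      intro g hg hxg h
      rw [hin g hg x hxg hxC, Equiv.swap_apply_eq_iff, Equiv.swap_apply_right] at h
      exact hγx g hg hxg h
    have hfγ : c f ≠ γ := hγz f hfA hzf
    have hfβ : c f ≠ β := hβy f hfA hyf
    have hf' : c' f = c f := by
      by_cases hyC : y ∈ C
      · rw [hin f hfA y hyf hyC, Equiv.swap_apply_of_ne_of_ne hfγ hfβ]
      · exact hout f hfA y hyf hyC
    by_cases hyC : y ∈ C
    · have hzC : z ∉ C := fun h => hyzC ⟨hyC, h⟩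
      refine extend_coloring_shift hc' hcr' hγr heA hfA hxy hz ?_ ?_ ?_
      · intro g hg hxg h
        rw [hf', hin g hg x hxg hxC, Equiv.swap_apply_eq_iff,
          Equiv.swap_apply_of_ne_of_ne hfγ hfβ] at h
        exact hαx g hg hxg h
      · intro g hg hyg h
        rw [hin g hg y hyg hyC, Equiv.swap_apply_eq_iff, Equiv.swap_apply_left] at h
        exact hβy g hg hyg h
      · intro g hg hzg h
        rw [hout g hg z hzg hzC] at h
        exact hγz g hg hzg h
    · refine extend_coloring hc' hcr' hβr heA ?_
      intro v hv
      rw [hxy, Sym2.mem_iff] at hv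
      rcases hv with rfl | rfl
      · exact hβx'
      · intro g hg hyg h
        rw [hout g hg v hyg hyC] at h
        exact hβy g hg hyg h

/-! ### Choosing the classes -/

/-- Greedy extension: a colouring `k₀` of `A₀` extends to `A₀ ∪ A` avoiding all conflicts that
involve an element of `A`, if each element of `A` has fewer than `r` conflicts. -/
lemma greedy_extension {X : Type*} [DecidableEq X] (Q : X → X → Prop) [DecidableRel Q]
    (hQ : ∀ e f, Q e f → Q f e) (r : ℕ) (A₀ : Finset X) (k₀ : X → ℕ) (hk₀ : ∀ e ∈ A₀, k₀ e < r)
    (A : Finset X) (hdisj : ∀ e ∈ A, e ∉ A₀)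
    (hbound : ∀ e ∈ A, ((A₀ ∪ A).filter fun f => f ≠ e ∧ Q e f).card < r) :
    ∃ k : X → ℕ, (∀ e ∈ A₀, k e = k₀ e) ∧ (∀ e ∈ A₀ ∪ A, k e < r) ∧
      ∀ e ∈ A, ∀ f ∈ A₀ ∪ A, f ≠ e → Q e f → k e ≠ k f := by
  induction A using Finset.induction_on with
  | empty => exact ⟨k₀, by simp, by simpa using hk₀, by simp⟩
  | insert e A heA ih =>
    have hsub : A₀ ∪ A ⊆ A₀ ∪ insert e A :=
      Finset.union_subset_union_right (Finset.subset_insert e A)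
    obtain ⟨k, h0, hr, hk⟩ := ih (fun f hf => hdisj f (Finset.mem_insert_of_mem hf)) (fun f hf =>
      (Finset.card_le_card (Finset.filter_subset_filter _ hsub)).trans_lt
        (hbound f (Finset.mem_insert_of_mem hf)))
    have he0 : e ∉ A₀ := hdisj e (Finset.mem_insert_self e A)
    obtain ⟨κ, hκ, hκm⟩ : ∃ κ < r, ∀ f ∈ A₀ ∪ A, f ≠ e → Q e f → k f ≠ κ := by
      have h1 : (((A₀ ∪ A).filter fun f => f ≠ e ∧ Q e f).image k).card < (Finset.range r).card := by
        rw [Finset.card_range]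
        exact Finset.card_image_le.trans_lt ((Finset.card_le_card
          (Finset.filter_subset_filter _ hsub)).trans_lt (hbound e (Finset.mem_insert_self e A)))
      obtain ⟨κ, h2, h3⟩ := Finset.exists_mem_notMem_of_card_lt_card h1
      refine ⟨κ, Finset.mem_range.1 h2, fun f hf hfe hQf hkf => h3 ?_⟩
      exact Finset.mem_image.2 ⟨f, Finset.mem_filter.2 ⟨hf, hfe, hQf⟩, hkf⟩
    have hne : ∀ f ∈ A₀ ∪ A, f ≠ e := by
      rintro f hf rfl
      rcases Finset.mem_union.1 hf with h | h
      exacts [he0 h, heA h]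
    have hmem : ∀ f ∈ A₀ ∪ insert e A, f = e ∨ f ∈ A₀ ∪ A := by
      intro f hf
      simp only [Finset.mem_union, Finset.mem_insert] at hf ⊢
      tauto
    refine ⟨Function.update k e κ, ?_, ?_, ?_⟩
    · intro f hf
      rw [Function.update_of_ne (hne f (Finset.mem_union_left _ hf)), h0 f hf]
    · intro f hf
      rcases hmem f hf with rfl | h
      · rwa [Function.update_self]
      · rw [Function.update_of_ne (hne f h)]
        exact hr f h
    · intro f hf g hg hgf hQfg
      rcases Finset.mem_insert.1 hf with hf1 | hf1
      · subst hf1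
        rcases hmem g hg with hg1 | hg1
        · exact absurd hg1 hgf
        · rw [Function.update_self, Function.update_of_ne hgf]
          exact (hκm g hg1 hgf hQfg).symm
      · have hfu : f ∈ A₀ ∪ A := Finset.mem_union_right _ hf1
        rw [Function.update_of_ne (hne f hfu)]
        rcases hmem g hg with hg1 | hg1
        · subst hg1
          rw [Function.update_self]
          exact hκm f hfu (hne f hfu) (hQ _ _ hQfg)
        · rw [Function.update_of_ne (hne g hg1)]
          exact hk f hf1 g hg1 hgf hQfg

open Classical in
lemma card_incident_le {V : Type*} [Fintype V] (G : SimpleGraph V) (w : V) :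
    (Finset.univ.filter fun f : Sym2 V => f ∈ G.edgeSet ∧ w ∈ f).card
      ≤ (G.neighborSet w).ncard := by
  rw [Set.ncard_eq_toFinset_card']
  refine (Finset.card_le_card ?_).trans (Finset.card_image_le (f := fun x => s(w, x)))
  intro f hf
  obtain ⟨-, hf, hw⟩ := Finset.mem_filter.1 hf
  obtain ⟨x, rfl⟩ := Sym2.mem_iff_exists.1 hw
  exact Finset.mem_image.2 ⟨x, by simpa using hf, rfl⟩

/-- The assignment of a class `k e < r` to each edge `e` of `G'`; the eventual colour of `e` is
`3 * k e + 1` or `3 * k e + 2`. The two `H'`-edges `v (a v)` and `v (b v)` at a vertex `v ∈ S₀` share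
their class, and apart from these pairs the classes of adjacent edges differ; the class of the
`H'`-edge `v (h v)` at `v ∈ S₁` does not occur at the `S`-neighbour of `v`. -/
lemma exists_classes {V : Type*} [Fintype V] (G G' H' : SimpleGraph V) (S S₀ S₁ : Set V)
    (D T r : ℕ) (hSS : ∀ u v : V, u ∈ S → v ∈ S → ¬ G'.Adj u v) (hH : H' ≤ G')
    (hS₀ : S₀ ⊆ S) (hS₁ : S₁ ⊆ S) (h01 : ∀ v ∈ S₀, v ∉ S₁)
    (a b h : V → V) (hab : ∀ v ∈ S₀, a v ≠ b v ∧ H'.neighborSet v = {a v, b v})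
    (hh : ∀ v ∈ S₁, H'.neighborSet v = {h v})
    (hN : ∀ v ∈ S₁, ∃ u, G.neighborSet v ∩ S = {u})
    (hG' : G' ≤ G)
    (hD : ∀ v ∉ S, (G'.neighborSet v).ncard ≤ D) (hT : ∀ v ∈ S, (G.neighborSet v).ncard ≤ T)
    (hr : 3 * D ≤ 2 * r) (hr' : D + 3 * T ≤ r) :
    ∃ k : Sym2 V → ℕ, (∀ e ∈ G'.edgeSet, k e < r) ∧
      (∀ u ∉ S, ∀ v w, G'.Adj u v → G'.Adj u w → v ≠ w → k s(u, v) ≠ k s(u, w)) ∧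
      (∀ u ∈ S, ∀ v w, G'.Adj u v → G'.Adj u w → v ≠ w →
        ¬ (u ∈ S₀ ∧ H'.Adj u v ∧ H'.Adj u w) → k s(u, v) ≠ k s(u, w)) ∧
      (∀ v ∈ S₁, ∀ u ∈ S, G.Adj u v → ∀ w, G'.Adj u w → k s(v, h v) ≠ k s(u, w)) ∧
      (∀ v ∈ S₀, k s(v, a v) = k s(v, b v)) := by
  classical
  have haH : ∀ v ∈ S₀, H'.Adj v (a v) := fun v hv => by
    have : a v ∈ H'.neighborSet v := by rw [(hab v hv).2]; simp
    exact this
  have hbH : ∀ v ∈ S₀, H'.Adj v (b v) := fun v hv => by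
    have : b v ∈ H'.neighborSet v := by rw [(hab v hv).2]; simp
    exact this
  have hhH : ∀ v ∈ S₁, H'.Adj v (h v) := fun v hv => by
    have : h v ∈ H'.neighborSet v := by rw [hh v hv]; simp
    exact this
  have haS : ∀ v ∈ S₀, a v ∉ S := fun v hv hc => hSS _ _ (hS₀ hv) hc (hH (haH v hv))
  have hbS : ∀ v ∈ S₀, b v ∉ S := fun v hv hc => hSS _ _ (hS₀ hv) hc (hH (hbH v hv))
  -- the multigraph outside `S`: the edges of `G'`, and for each `v ∈ S₀` an edge from `a v` to `b v`
  let ends : V ⊕ Sym2 V → Sym2 V := Sum.elim (fun v => s(a v, b v)) id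
  let M : Finset (V ⊕ Sym2 V) := Finset.univ.filter
    (Sum.elim (fun v => v ∈ S₀) (fun e => e ∈ G'.edgeSet ∧ ∀ v ∈ e, v ∉ S))
  have hMl : ∀ v, Sum.inl v ∈ M ↔ v ∈ S₀ := by intro v; simp [M]
  have hMr : ∀ e, Sum.inr e ∈ M ↔ e ∈ G'.edgeSet ∧ ∀ v ∈ e, v ∉ S := by intro e; simp [M]
  obtain ⟨c₀, hc₀, hc₀r⟩ := shannon ends D r hr M (by
      rintro (v | e) he
      · rw [hMl] at he
        exact fun hd => (hab v he).1 (Sym2.mk_isDiag_iff.1 hd)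
      · rw [hMr] at he
        exact G'.not_isDiag_of_mem_edgeSet he.1) (by
      intro u
      by_cases hu : u ∈ S
      · rw [Finset.card_eq_zero.2]
        · exact Nat.zero_le _
        · rw [Finset.filter_eq_empty_iff]
          rintro (v | e) he hue
          · rw [hMl] at he
            rcases Sym2.mem_iff.1 hue with rfl | rfl
            exacts [haS v he hu, hbS v he hu]
          · rw [hMr] at he
            exact he.2 u hue hu
      · refine le_trans ?_ ((card_incident_le G' u).trans (hD u hu))
        refine Finset.card_le_card_of_injOn (Sum.elim (fun v => s(v, u)) id) ?_ ?_
        · rintro (v | e) he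
          · obtain ⟨hv, hue⟩ := Finset.mem_filter.1 he
            rw [hMl] at hv
            refine Finset.mem_coe.2 (Finset.mem_filter.2 ⟨Finset.mem_univ _, ?_,
              Sym2.mem_mk_right v u⟩)
            refine hH ?_
            rcases Sym2.mem_iff.1 hue with rfl | rfl
            exacts [haH v hv, hbH v hv]
          · obtain ⟨he, hue⟩ := Finset.mem_filter.1 he
            rw [hMr] at he
            exact Finset.mem_coe.2 (Finset.mem_filter.2 ⟨Finset.mem_univ _, he.1, hue⟩)
        · have key : ∀ v e, Sum.inl v ∈ M → Sum.inr e ∈ M → s(v, u) ≠ e := by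
            rintro v e hv he rfl
            rw [hMl] at hv
            rw [hMr] at he
            exact he.2 v (Sym2.mem_mk_left v u) (hS₀ hv)
          rintro (v | e) he (v' | e') he' heq
          · exact congrArg _ (Sym2.congr_left.1 heq)
          · exact absurd heq (key _ _ (Finset.mem_filter.1 he).1 (Finset.mem_filter.1 he').1)
          · exact absurd heq.symm (key _ _ (Finset.mem_filter.1 he').1 (Finset.mem_filter.1 he).1)
          · exact congrArg _ heq)
  let item : Sym2 V → V ⊕ Sym2 V := fun e =>
    if hx : ∃ v ∈ e, v ∈ S₀ then Sum.inl hx.choose else Sum.inr e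
  have item_l : ∀ v w, v ∈ S₀ → w ∉ S → item s(v, w) = Sum.inl v := by
    intro v w hv hw
    have hx : ∃ u ∈ s(v, w), u ∈ S₀ := ⟨v, Sym2.mem_mk_left v w, hv⟩
    have h1 : item s(v, w) = Sum.inl hx.choose := dif_pos hx
    rw [h1]
    rcases Sym2.mem_iff.1 hx.choose_spec.1 with h2 | h2
    · rw [h2]
    · exact absurd (hS₀ (h2 ▸ hx.choose_spec.2)) hw
  have item_r : ∀ e : Sym2 V, (∀ v ∈ e, v ∉ S) → item e = Sum.inr e := by
    intro e he
    exact dif_neg fun ⟨v, hve, hv⟩ => he v hve (hS₀ hv)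
  let A₀ : Finset (Sym2 V) := Finset.univ.filter fun e => e ∈ G'.edgeSet ∧
    ((∀ v ∈ e, v ∉ S) ∨ ∃ v ∈ S₀, v ∈ e ∧ e ∈ H'.edgeSet)
  have hA₀ : ∀ e, e ∈ A₀ ↔ e ∈ G'.edgeSet ∧
    ((∀ v ∈ e, v ∉ S) ∨ ∃ v ∈ S₀, v ∈ e ∧ e ∈ H'.edgeSet) := by intro e; simp [A₀]
  let A : Finset (Sym2 V) := Finset.univ.filter fun e => e ∈ G'.edgeSet ∧ e ∉ A₀
  have hA : ∀ e, e ∈ A ↔ e ∈ G'.edgeSet ∧ e ∉ A₀ := by intro e; simp [A]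
  have hAA : ∀ e, e ∈ A₀ ∪ A ↔ e ∈ G'.edgeSet := by
    intro e
    rw [Finset.mem_union, hA]
    constructor
    · rintro (h1 | h1)
      exacts [((hA₀ e).1 h1).1, h1.1]
    · intro h1
      by_cases h2 : e ∈ A₀
      exacts [Or.inl h2, Or.inr ⟨h1, h2⟩]
  have hitem : ∀ e ∈ A₀, ∀ u ∈ e, u ∉ S → item e ∈ M ∧ u ∈ ends (item e) ∧
      (item e = Sum.inr e ∨ ∃ v, e = s(v, u) ∧ item e = Sum.inl v) := by
    intro e he u hue hu
    obtain ⟨heG, h1 | ⟨v, hv, hve, heH⟩⟩ := (hA₀ e).1 he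
    · rw [item_r e h1]
      exact ⟨(hMr e).2 ⟨heG, h1⟩, hue, Or.inl rfl⟩
    · have hvu : v ≠ u := fun hc => hu (hc ▸ hS₀ hv)
      have h2 : e = s(v, u) := (Sym2.mem_and_mem_iff hvu).1 ⟨hve, hue⟩
      subst h2
      rw [item_l v u hv hu]
      refine ⟨(hMl v).2 hv, ?_, Or.inr ⟨v, rfl, rfl⟩⟩
      have h3 : u ∈ H'.neighborSet v := heH
      rw [(hab v hv).2] at h3
      exact Sym2.mem_iff.2 h3
  have hitem' : ∀ e ∈ A₀, item e ∈ M := by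
    intro e he
    induction e with | _ x y =>
    by_cases hx : x ∈ S
    · have hy : y ∉ S := fun hy => hSS x y hx hy ((hA₀ _).1 he).1
      exact (hitem _ he y (Sym2.mem_mk_right x y) hy).1
    · exact (hitem _ he x (Sym2.mem_mk_left x y) hx).1
  -- `P e f`: `e` is the `H'`-edge at some `v ∈ S₁`, and `f` meets an `S`-neighbour of `v`
  let P : Sym2 V → Sym2 V → Prop := fun e f =>
    e ∈ H'.edgeSet ∧ ∃ v ∈ S₁, v ∈ e ∧ ∃ u ∈ S, G.Adj u v ∧ u ∈ f
  let Q : Sym2 V → Sym2 V → Prop := fun e f => (∃ u, u ∈ e ∧ u ∈ f) ∨ P e f ∨ P f e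
  have hQ : ∀ e f, Q e f → Q f e := by
    rintro e f (⟨u, h1, h2⟩ | h1 | h1)
    exacts [Or.inl ⟨u, h2, h1⟩, Or.inr (Or.inr h1), Or.inr (Or.inl h1)]
  have hbound : ∀ e ∈ A, ((A₀ ∪ A).filter fun f => f ≠ e ∧ Q e f).card < r := by
    intro e he
    obtain ⟨heG, he0⟩ := (hA e).1 he
    obtain ⟨v, hve, hv⟩ : ∃ v ∈ e, v ∈ S := by
      by_contra hcon
      push Not at hcon
      exact he0 ((hA₀ e).2 ⟨heG, Or.inl hcon⟩)
    obtain ⟨w, rfl⟩ := Sym2.mem_iff_exists.1 hve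
    have hw : w ∉ S := fun hw => hSS v w hv hw heG
    let inc : V → Finset (Sym2 V) := fun w =>
      Finset.univ.filter fun f : Sym2 V => f ∈ G'.edgeSet ∧ w ∈ f
    have hinc : ∀ w f, f ∈ inc w ↔ f ∈ G'.edgeSet ∧ w ∈ f := by intro w f; simp [inc]
    have hincT : ∀ u ∈ S, (inc u).card ≤ T := by
      intro u hu
      refine (card_incident_le G' u).trans (le_trans ?_ (hT u hu))
      exact Set.ncard_le_ncard (fun x hx => hG' hx)
    have hincD : ((inc w).erase s(v, w)).card < D := by
      have h1 : s(v, w) ∈ inc w := (hinc w _).2 ⟨heG, Sym2.mem_mk_right v w⟩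
      exact (Finset.card_erase_lt_of_mem h1).trans_le ((card_incident_le G' w).trans (hD w hw))
    obtain ⟨X, hX, hXP⟩ : ∃ X : Finset (Sym2 V), X.card ≤ T ∧
        ∀ f ∈ G'.edgeSet, P s(v, w) f → f ∈ X := by
      by_cases hv1 : v ∈ S₁
      · obtain ⟨u, hu⟩ := hN v hv1
        have huS : u ∈ S := by
          have : u ∈ G.neighborSet v ∩ S := by rw [hu]; rfl
          exact this.2
        refine ⟨inc u, hincT u huS, ?_⟩
        rintro f hf ⟨-, v', hv', hve', u', hu', hadj, huf⟩
        have hvv : v' = v := by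
          rcases Sym2.mem_iff.1 hve' with h1 | h1
          · exact h1
          · exact absurd (hS₁ (h1 ▸ hv')) hw
        subst hvv
        have h2 : u' ∈ G.neighborSet v' ∩ S := ⟨hadj.symm, hu'⟩
        rw [hu] at h2
        rw [Set.mem_singleton_iff] at h2
        subst h2
        exact (hinc _ f).2 ⟨hf, huf⟩
      · refine ⟨∅, by simp, ?_⟩
        rintro f hf ⟨-, v', hv', hve', -⟩
        rcases Sym2.mem_iff.1 hve' with h1 | h1
        · exact absurd (h1 ▸ hv') hv1
        · exact absurd (hS₁ (h1 ▸ hv')) hw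
    let Y : Finset (Sym2 V) := (G.neighborSet v).toFinset.image fun x => s(x, h x)
    have hY : Y.card ≤ T := by
      refine Finset.card_image_le.trans ?_
      rw [← Set.ncard_eq_toFinset_card']
      exact hT v hv
    have hsub : ((A₀ ∪ A).filter fun f => f ≠ s(v, w) ∧ Q s(v, w) f) ⊆
        (inc w).erase s(v, w) ∪ inc v ∪ X ∪ Y := by
      intro f hf
      obtain ⟨hfG, hne, hQf⟩ := Finset.mem_filter.1 hf
      rw [hAA] at hfG
      simp only [Finset.mem_union, Finset.mem_erase, hinc]
      rcases hQf with ⟨u, hue, huf⟩ | hP | ⟨hfH, v', hv', hvf, u, hu, hadj, hue⟩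
      · rcases Sym2.mem_iff.1 hue with rfl | rfl
        · exact Or.inl (Or.inl (Or.inr ⟨hfG, huf⟩))
        · exact Or.inl (Or.inl (Or.inl ⟨hne, hfG, huf⟩))
      · exact Or.inl (Or.inr (hXP f hfG hP))
      · right
        have huv : u = v := by
          rcases Sym2.mem_iff.1 hue with h1 | h1
          · exact h1
          · exact absurd (h1 ▸ hu) hw
        subst huv
        obtain ⟨x, rfl⟩ := Sym2.mem_iff_exists.1 hvf
        have hx : x ∈ H'.neighborSet v' := hfH
        rw [hh v' hv', Set.mem_singleton_iff] at hx
        subst hx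
        exact Finset.mem_image.2 ⟨v', by simpa using hadj, rfl⟩
    have h1 := Finset.card_le_card hsub
    have h2 := Finset.card_union_le ((inc w).erase s(v, w) ∪ inc v ∪ X) Y
    have h3 := Finset.card_union_le ((inc w).erase s(v, w) ∪ inc v) X
    have h4 := Finset.card_union_le ((inc w).erase s(v, w)) (inc v)
    have h5 := hincT v hv
    omega
  obtain ⟨k, hk0, hkr, hkA⟩ := greedy_extension Q hQ r A₀ (fun e => c₀ (item e))
    (fun e he => hc₀r _ (hitem' e he)) A (fun e he => ((hA e).1 he).2) hbound
  have hkQ : ∀ e ∈ G'.edgeSet, ∀ f ∈ G'.edgeSet, e ≠ f → Q e f → ¬ (e ∈ A₀ ∧ f ∈ A₀) →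
      k e ≠ k f := by
    intro e he f hf hef hQef hnot
    by_cases heA : e ∈ A₀
    · have hfA : f ∈ A := (hA f).2 ⟨hf, fun hc => hnot ⟨heA, hc⟩⟩
      exact (hkA f hfA e ((hAA e).2 he) hef (hQ _ _ hQef)).symm
    · exact hkA e ((hA e).2 ⟨he, heA⟩) f ((hAA f).2 hf) hef.symm hQef
  refine ⟨k, fun e he => hkr e ((hAA e).2 he), ?_, ?_, ?_, ?_⟩
  · intro u hu v w huv huw hvw
    have hne : s(u, v) ≠ s(u, w) := fun hc => hvw (Sym2.congr_right.1 hc)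
    have hev := Sym2.mem_mk_left u v
    have hew := Sym2.mem_mk_left u w
    by_cases hboth : s(u, v) ∈ A₀ ∧ s(u, w) ∈ A₀
    · rw [hk0 _ hboth.1, hk0 _ hboth.2]
      obtain ⟨h1, h2, h3⟩ := hitem _ hboth.1 u hev hu
      obtain ⟨h4, h5, h6⟩ := hitem _ hboth.2 u hew hu
      refine hc₀ _ h1 _ h4 ?_ u h2 h5
      intro heq
      rcases h3 with h3 | ⟨x, h3, h3'⟩ <;> rcases h6 with h6 | ⟨y, h6, h6'⟩
      · exact hne (Sum.inr_injective (h3.symm.trans (heq.trans h6)))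
      · exact Sum.inr_ne_inl (h3.symm.trans (heq.trans h6'))
      · exact Sum.inl_ne_inr (h3'.symm.trans (heq.trans h6))
      · have hxy : x = y := Sum.inl_injective (h3'.symm.trans (heq.trans h6'))
        exact hne (h3.trans (hxy ▸ h6.symm))
    · exact hkQ _ huv _ huw hne (Or.inl ⟨u, hev, hew⟩) hboth
  · intro u hu v w huv huw hvw hnot
    have hne : s(u, v) ≠ s(u, w) := fun hc => hvw (Sym2.congr_right.1 hc)
    refine hkQ _ huv _ huw hne (Or.inl ⟨u, Sym2.mem_mk_left u v, Sym2.mem_mk_left u w⟩) ?_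
    have key : ∀ x, G'.Adj u x → s(u, x) ∈ A₀ → u ∈ S₀ ∧ H'.Adj u x := by
      intro x hux hx
      rcases ((hA₀ _).1 hx).2 with h1 | ⟨y, hy, hyx, hH1⟩
      · exact absurd hu (h1 u (Sym2.mem_mk_left u x))
      · refine ⟨?_, hH1⟩
        rcases Sym2.mem_iff.1 hyx with rfl | rfl
        · exact hy
        · exact absurd hux (hSS u y hu (hS₀ hy))
    rintro ⟨h1, h2⟩
    exact hnot ⟨(key v huv h1).1, (key v huv h1).2, (key w huw h2).2⟩
  · intro v hv u hu huv w huw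
    have hvh := hhH v hv
    have hhS : h v ∉ S := fun hc => hSS v (h v) (hS₁ hv) hc (hH hvh)
    refine hkQ _ (hH hvh) _ huw ?_ (Or.inr (Or.inl ⟨hvh, v, hv, Sym2.mem_mk_left _ _, u, hu, huv,
      Sym2.mem_mk_left _ _⟩)) ?_
    · intro hc
      have h1 : u ∈ s(v, h v) := hc ▸ Sym2.mem_mk_left u w
      rcases Sym2.mem_iff.1 h1 with h2 | h2
      · exact huv.ne h2
      · exact hhS (h2 ▸ hu)
    · rintro ⟨h1, -⟩
      rcases ((hA₀ _).1 h1).2 with h2 | ⟨y, hy, hyx, -⟩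
      · exact h2 v (Sym2.mem_mk_left _ _) (hS₁ hv)
      · rcases Sym2.mem_iff.1 hyx with h3 | h3
        · exact h01 y hy (h3 ▸ hv)
        · exact hhS (h3 ▸ hS₀ hy)
  · intro v hv
    have h1 : ∀ x, x ∉ S → H'.Adj v x → k s(v, x) = c₀ (Sum.inl v) := by
      intro x hx hadj
      rw [hk0 s(v, x) ((hA₀ _).2 ⟨hH hadj, Or.inr ⟨v, hv, Sym2.mem_mk_left v x, hadj⟩⟩),
        item_l v x hv hx]
    rw [h1 _ (haS v hv) (haH v hv), h1 _ (hbS v hv) (hbH v hv)]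

/-! ### From classes to colours -/

/-- The combinatorial core of the theorem, with natural-number bounds `D` and `T` on the degrees
outside and inside `S`. -/
lemma exists_coloring {V : Type*} [Fintype V] (G G' H' : SimpleGraph V) (S S₀ S₁ : Set V)
    (D T r : ℕ) (hSS : ∀ u v : V, u ∈ S → v ∈ S → ¬ G'.Adj u v) (hH : H' ≤ G')
    (hS₀ : S₀ ⊆ S) (hS₁ : S₁ ⊆ S) (h01 : ∀ v ∈ S₀, v ∉ S₁)
    (h0 : ∀ v ∈ S₀, (H'.neighborSet v).ncard = 2) (h1 : ∀ v ∈ S₁, (H'.neighborSet v).ncard = 1)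
    (hN : ∀ v ∈ S₁, (G.neighborSet v ∩ S).ncard = 1) (hG' : G' ≤ G)
    (hD : ∀ v ∉ S, (G'.neighborSet v).ncard ≤ D) (hT : ∀ v ∈ S, (G.neighborSet v).ncard ≤ T)
    (hr : 3 * D ≤ 2 * r) (hr' : D + 3 * T ≤ r) :
    ∃ c : Sym2 V → ℕ,
      IsProperEdgeColoring G' c ∧
      (∀ e ∈ G'.edgeSet, 1 ≤ c e ∧ c e ≤ 3 * r) ∧
      (c '' G'.edgeSet).ncard ≤ 2 * r ∧
      (∀ u ∉ S, ∀ v w : V, G'.Adj u v → G'.Adj u w → v ≠ w →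
        2 ≤ |(c s(u, v) : ℤ) - (c s(u, w) : ℤ)|) ∧
      (∀ v ∈ S₀, ∃ k : ℕ, k ∈ palette G' c v ∧ k + 1 ∈ palette G' c v) ∧
      (∀ v ∈ S₁, ∀ u ∈ S, G.Adj u v → ∃ k ∈ palette G' c v, k ∉ palette G' c u) := by
  classical
  have hab' : ∀ v, ∃ p : V × V, v ∈ S₀ → p.1 ≠ p.2 ∧ H'.neighborSet v = {p.1, p.2} := by
    intro v
    by_cases hv : v ∈ S₀
    · obtain ⟨x, y, hxy, hs⟩ := Set.ncard_eq_two.1 (h0 v hv)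
      exact ⟨(x, y), fun _ => ⟨hxy, hs⟩⟩
    · exact ⟨(v, v), fun hc => absurd hc hv⟩
  choose p hp using hab'
  have hh' : ∀ v, ∃ x, v ∈ S₁ → H'.neighborSet v = {x} := by
    intro v
    by_cases hv : v ∈ S₁
    · obtain ⟨x, hs⟩ := Set.ncard_eq_one.1 (h1 v hv)
      exact ⟨x, fun _ => hs⟩
    · exact ⟨v, fun hc => absurd hc hv⟩
  choose h hh using hh'
  obtain ⟨k, hkr, hkB, hkS, hkS₁, hkS₀⟩ := exists_classes G G' H' S S₀ S₁ D T r hSS hH hS₀ hS₁ h01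
    (fun v => (p v).1) (fun v => (p v).2) h hp hh (fun v hv => Set.ncard_eq_one.1 (hN v hv)) hG'
    hD hT hr hr'
  let t : Sym2 V → ℕ := fun e => if ∃ v ∈ S₀, e = s(v, (p v).2) then 1 else 0
  have ht : ∀ e, t e = 0 ∨ t e = 1 := by intro e; simp only [t]; split_ifs <;> simp
  have hpH : ∀ v ∈ S₀, H'.Adj v (p v).1 ∧ H'.Adj v (p v).2 := by
    intro v hv
    constructor
    · have : (p v).1 ∈ H'.neighborSet v := by rw [(hp v hv).2]; simp
      exact this
    · have : (p v).2 ∈ H'.neighborSet v := by rw [(hp v hv).2]; simp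
      exact this
  have ht2 : ∀ v ∈ S₀, t s(v, (p v).2) = 1 := fun v hv => if_pos ⟨v, hv, rfl⟩
  have ht1 : ∀ v ∈ S₀, t s(v, (p v).1) = 0 := by
    intro v hv
    refine if_neg ?_
    rintro ⟨x, hx, heq⟩
    have hvx : v = x := by
      have h2 : x ∈ s(v, (p v).1) := heq ▸ Sym2.mem_mk_left _ _
      rcases Sym2.mem_iff.1 h2 with h3 | h3
      · exact h3.symm
      · exact absurd (hH (hpH v hv).1) (hSS _ _ (hS₀ hv) (h3 ▸ hS₀ hx))
    subst hvx
    exact (hp v hv).1 (Sym2.congr_right.1 heq)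
  let c : Sym2 V → ℕ := fun e => 3 * k e + 1 + t e
  have hc : ∀ e, c e = 3 * k e + 1 + t e := fun _ => rfl
  have hck : ∀ e f, c e = c f → k e = k f := by
    intro e f hef
    have := ht e
    have := ht f
    rw [hc, hc] at hef
    omega
  refine ⟨c, ?_, ?_, ?_, ?_, ?_, ?_⟩
  · intro u v w huv huw hvw heq
    by_cases hu : u ∈ S
    · by_cases hx : u ∈ S₀ ∧ H'.Adj u v ∧ H'.Adj u w
      · obtain ⟨hu0, hv, hw⟩ := hx
        have hv' : v ∈ H'.neighborSet u := hv
        have hw' : w ∈ H'.neighborSet u := hw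
        rw [(hp u hu0).2] at hv' hw'
        have e1 := ht1 u hu0
        have e2 := ht2 u hu0
        have e3 := hck _ _ heq
        rw [hc, hc, e3] at heq
        rcases hv' with rfl | hv' <;> rcases hw' with rfl | hw'
        · exact hvw rfl
        · rw [Set.mem_singleton_iff] at hw'
          subst hw'
          omega
        · rw [Set.mem_singleton_iff] at hv'
          subst hv'
          omega
        · exact hvw (hv'.trans hw'.symm)
      · exact hkS u hu v w huv huw hvw hx (hck _ _ heq)
    · exact hkB u hu v w huv huw hvw (hck _ _ heq)
  · intro e he
    have := hkr e he
    have := ht e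
    rw [hc]
    omega
  · have hsub : c '' G'.edgeSet ⊆
        ((Finset.range r ×ˢ Finset.range 2).image fun q => 3 * q.1 + 1 + q.2 : Finset ℕ) := by
      rintro _ ⟨e, he, rfl⟩
      have h2 := hkr e he
      have h3 := ht e
      refine Finset.mem_coe.2 (Finset.mem_image.2 ⟨(k e, t e), ?_, rfl⟩)
      simp only [Finset.mem_product, Finset.mem_range]
      omega
    refine (Set.ncard_le_ncard hsub (Finset.finite_toSet _)).trans ?_
    rw [Set.ncard_coe_finset]
    refine Finset.card_image_le.trans ?_
    rw [Finset.card_product, Finset.card_range, Finset.card_range, mul_comm]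
  · intro u hu v w huv huw hvw
    have h2 := hkB u hu v w huv huw hvw
    have h3 := ht s(u, v)
    have h4 := ht s(u, w)
    rw [hc, hc, le_abs]
    push_cast
    omega
  · intro v hv
    refine ⟨c s(v, (p v).1), ⟨_, hH (hpH v hv).1, rfl⟩, ⟨_, hH (hpH v hv).2, ?_⟩⟩
    rw [hc, hc, ht1 v hv, ht2 v hv, hkS₀ v hv]
  · intro v hv u hu huv
    have hvh : H'.Adj v (h v) := by
      have : h v ∈ H'.neighborSet v := by rw [hh v hv]; simp
      exact this
    refine ⟨c s(v, h v), ⟨_, hH hvh, rfl⟩, ?_⟩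
    rintro ⟨w, huw, heq⟩
    exact hkS₁ v hv u hu huv w huw (hck _ _ heq).symm

lemma exists_threshold (δ : ℕ) (hδ : 3 ≤ δ) : ∃ Δ₀ : ℕ, ∀ Δ : ℕ, Δ₀ ≤ Δ →
    3 * ((Δ : ℝ) ^ ((2 : ℝ) / 3) * Real.log Δ ^ 4) ≤ Δ / δ := by
  have hδ0 : (0 : ℝ) < δ := by exact_mod_cast (by omega : 0 < δ)
  have h1 : (fun x : ℝ => Real.log x ^ (4 : ℝ)) =o[Filter.atTop] fun x => x ^ ((1 : ℝ) / 3) :=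
    isLittleO_log_rpow_rpow_atTop 4 (by norm_num)
  have h2 := (h1.bound (c := 1 / (3 * δ)) (by positivity)).and (Filter.eventually_ge_atTop 1)
  obtain ⟨N, hN⟩ := Filter.eventually_atTop.1
    (tendsto_natCast_atTop_atTop (R := ℝ) |>.eventually h2)
  refine ⟨N, fun Δ hΔ => ?_⟩
  obtain ⟨h3, h4⟩ := hN Δ hΔ
  have hpos : (0 : ℝ) < Δ := by linarith
  have hlog : 0 ≤ Real.log Δ := Real.log_nonneg h4
  rw [Real.norm_of_nonneg (by positivity), Real.norm_of_nonneg (by positivity)] at h3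
  have e1 : Real.log Δ ^ (4 : ℝ) = Real.log Δ ^ 4 := by
    rw [← Real.rpow_natCast]; norm_num
  rw [e1] at h3
  have e2 : (Δ : ℝ) ^ ((2 : ℝ) / 3) * (Δ : ℝ) ^ ((1 : ℝ) / 3) = Δ := by
    rw [← Real.rpow_add hpos]; norm_num
  calc 3 * ((Δ : ℝ) ^ ((2 : ℝ) / 3) * Real.log Δ ^ 4)
      ≤ 3 * ((Δ : ℝ) ^ ((2 : ℝ) / 3) * (1 / (3 * δ) * (Δ : ℝ) ^ ((1 : ℝ) / 3))) := by gcongr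
    _ = ((Δ : ℝ) ^ ((2 : ℝ) / 3) * (Δ : ℝ) ^ ((1 : ℝ) / 3)) / δ := by field_simp
    _ = Δ / δ := by rw [e2]

theorem claim_coloring_of_G' (δ : ℕ) (hδ : 3 ≤ δ) :
    ∃ Δ₀ : ℕ, ∀ (V : Type) [Fintype V] (G : SimpleGraph V) [DecidableRel G.Adj] (Δ : ℕ),
      G.minDegree = δ → G.maxDegree = Δ → Δ₀ ≤ Δ →
      ∀ (S B S₀ S₁ : Set V) (H : SimpleGraph V),
        S = {v : V | (G.degree v : ℝ) ≤ (Δ : ℝ) ^ ((2 : ℝ) / 3) * Real.log Δ ^ 4} →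
        B = {v : V | (Δ : ℝ) ^ ((2 : ℝ) / 3) * Real.log Δ ^ 4 < (G.degree v : ℝ)} →
        S₀ = {v ∈ S | ∀ u : V, G.Adj v u → u ∉ S} →
        S₁ = {v ∈ S | (G.neighborSet v ∩ S).ncard = 1} →
        H = SimpleGraph.fromRel (fun u v => G.Adj u v ∧ u ∈ S₀ ∪ S₁ ∧ v ∈ B) →
      ∀ (G' H' : SimpleGraph V),
        G' ≤ G → (∀ u v : V, u ∈ S → v ∈ S → ¬ G'.Adj u v) →
        H' ≤ G' → H' ≤ H →
        (∀ v ∈ S₀, (H'.neighborSet v).ncard = 2) →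
        (∀ v ∈ S₁, (H'.neighborSet v).ncard = 1) →
        (∀ v ∈ B, ((G'.neighborSet v).ncard : ℝ) ≤
          (G.degree v : ℝ) * (2 / (δ : ℝ)) * (1 + (δ : ℝ) / (Δ : ℝ) ^ ((1 : ℝ) / 3))) →
      ∀ r : ℕ, r = ⌈3 / (δ : ℝ) * Δ * (1 + (δ : ℝ) / (Δ : ℝ) ^ ((1 : ℝ) / 3))⌉₊ →
      ∃ c : Sym2 V → ℕ,
        IsProperEdgeColoring G' c ∧
        (∀ e ∈ G'.edgeSet, 1 ≤ c e ∧ c e ≤ 3 * r) ∧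
        (c '' G'.edgeSet).ncard ≤ 2 * r ∧
        (∀ u ∈ B, ∀ v w : V, G'.Adj u v → G'.Adj u w → v ≠ w →
          2 ≤ |(c s(u, v) : ℤ) - (c s(u, w) : ℤ)|) ∧
        (∀ v ∈ S₀, ∃ k : ℕ, k ∈ palette G' c v ∧ k + 1 ∈ palette G' c v) ∧
        (∀ v ∈ S₁, ∀ u ∈ S, G.Adj u v →
          ∃ k ∈ palette G' c v, k ∉ palette G' c u) := by
  obtain ⟨Δ₀, hΔ₀⟩ := exists_threshold δ hδ
  refine ⟨Δ₀, ?_⟩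
  intro V _ G _ Δ hmin hmax hΔ S B S₀ S₁ H hS hB hS₀ hS₁ hH G' H' hG' hSS hHG hHH h0 h1 hdeg r hr
  have hδ0 : (0 : ℝ) < δ := by exact_mod_cast (by omega : 0 < δ)
  set q : ℝ := 1 + (δ : ℝ) / (Δ : ℝ) ^ ((1 : ℝ) / 3) with hq
  have hq1 : 1 ≤ q := by
    have : 0 ≤ (δ : ℝ) / (Δ : ℝ) ^ ((1 : ℝ) / 3) := by positivity
    linarith
  set t : ℝ := (Δ : ℝ) ^ ((2 : ℝ) / 3) * Real.log Δ ^ 4 with ht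
  have ht0 : 0 ≤ t := by positivity
  have hBS : ∀ v, v ∈ B ↔ v ∉ S := by
    intro v
    rw [hB, hS]
    simp
  have hdegree : ∀ v, (G.neighborSet v).ncard = G.degree v := by
    intro v
    rw [Set.ncard_eq_toFinset_card', ← SimpleGraph.card_neighborFinset_eq_degree]
    rfl
  set d : ℝ := Δ * (2 / (δ : ℝ)) * q with hd
  have hd0 : 0 ≤ d := by positivity
  have hrd : 3 / 2 * d ≤ r := by
    have := Nat.le_ceil (3 / (δ : ℝ) * Δ * q)
    rw [← hr] at this
    calc 3 / 2 * d = 3 / (δ : ℝ) * Δ * q := by rw [hd]; ring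
      _ ≤ r := this
  -- `d ≥ 2Δ/δ`, so the bound on `t` leaves room for three low-degree neighbourhoods
  have htd : 3 * t ≤ d / 2 := by
    refine (hΔ₀ Δ hΔ).trans ?_
    have h2 : (0 : ℝ) ≤ Δ / δ := by positivity
    have h3 : d / 2 = Δ / δ * q := by rw [hd]; ring
    rw [h3]
    nlinarith
  have hfd := Nat.floor_le hd0
  have hft := Nat.floor_le ht0
  obtain ⟨c, p1, p2, p3, p4, p5, p6⟩ := exists_coloring G G' H' S S₀ S₁ ⌊d⌋₊ ⌊t⌋₊ r hSS hHG
    (by rw [hS₀]; exact fun v hv => hv.1) (by rw [hS₁]; exact fun v hv => hv.1)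
    (by
      intro v hv hv1
      rw [hS₀] at hv
      rw [hS₁] at hv1
      obtain ⟨u, hu⟩ := Set.ncard_eq_one.1 hv1.2
      have hmem : u ∈ G.neighborSet v ∩ S := by rw [hu]; rfl
      exact hv.2 u hmem.1 hmem.2)
    h0 h1 (by intro v hv; rw [hS₁] at hv; exact hv.2) hG'
    (by
      intro v hv
      refine Nat.le_floor ((hdeg v ((hBS v).2 hv)).trans ?_)
      have h2 : (G.degree v : ℝ) ≤ Δ := by
        exact_mod_cast hmax ▸ G.degree_le_maxDegree v
      rw [hd]
      gcongr)
    (by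
      intro v hv
      rw [hdegree]
      rw [hS] at hv
      exact Nat.le_floor hv)
    (by
      have : (3 * ⌊d⌋₊ : ℝ) ≤ 2 * r := by linarith
      exact_mod_cast this)
    (by
      have : (⌊d⌋₊ + 3 * ⌊t⌋₊ : ℝ) ≤ r := by linarith
      exact_mod_cast this)
  exact ⟨c, p1, p2, p3, fun u hu => p4 u ((hBS u).1 hu), p5, p6⟩
end

section
/- There exists Δ₀ such that the following holds for every Δ ≥ Δ₀. Let G₁ be a graph of maximum degree at most Δ whose vertex set is partitioned into sets B and S such that every v ∈ B has degree at least (1/4)·Δ^{2/3}·(log Δ)^4 in G₁ and every v ∈ S has degree at most Δ^{2/3}·(log Δ)^4 in G₁ (log denoting the natural logarithm). Then there is a subgraph F of G₁ such that: (i) (1/8)·(log Δ)^2 ≤ d_F(v) ≤ 2·Δ^{1/3}/(log Δ)^2 for every v ∈ B, and (ii) d_F(v) ≤ 2·(log Δ)^2 for every v ∈ S, where d_F(v) denotes the degree of v in F. -/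
/-- The elements of each fibre of `a` in `E` can be paired up, leaving at most one unpaired. The
pairing is an involution `σ` of `E` whose fixed points are the unpaired elements. -/
theorem exists_pairing {α β : Type*} [DecidableEq α] (a : α → β) (E : Finset α) :
    ∃ σ : α → α, (∀ e ∈ E, σ e ∈ E ∧ σ (σ e) = e ∧ a (σ e) = a e) ∧
      ∀ e ∈ E, ∀ f ∈ E, a e = a f → σ e = e → σ f = f → e = f := by
  induction E using Finset.strongInduction with
  | H E ih =>
    by_cases h : ∃ e ∈ E, ∃ f ∈ E, e ≠ f ∧ a e = a f
    · obtain ⟨e, he, f, hf, hef, hab⟩ := h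
      obtain ⟨σ, h1, h2⟩ := ih ((E.erase e).erase f)
        ((Finset.erase_subset _ _).trans_ssubset (Finset.erase_ssubset he))
      simp only [Finset.mem_erase] at h1 h2
      refine ⟨fun x => if x = e then f else if x = f then e else σ x, ?_, ?_⟩
      · intro x hx
        have := h1 x
        grind
      · intro x hx y hy
        have := h2 x
        grind
    · push Not at h
      exact ⟨id, by simp, fun e he f hf hab _ _ => by
        by_contra hne
        exact h e he f hf hne hab⟩

/-- The union of two matchings is bipartite: its components are paths and even cycles. The matchings
are given as involutions `σ`, `τ` of `E`, fixed points being unmatched elements. The proof deletes a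
`σ`-pair `e, f`, splices the `τ`-partners of `e` and `f` together, and extends the colouring. -/
theorem exists_alternating {α : Type*} [DecidableEq α] (E : Finset α) :
    ∀ σ τ : α → α, (∀ e ∈ E, σ e ∈ E ∧ σ (σ e) = e) → (∀ e ∈ E, τ e ∈ E ∧ τ (τ e) = e) →
      ∃ c : α → Bool, (∀ e ∈ E, σ e ≠ e → c (σ e) = !c e) ∧
        (∀ e ∈ E, τ e ≠ e → c (τ e) = !c e) := by
  induction E using Finset.strongInduction with
  | H E ih =>
    have key : ∀ σ τ : α → α, (∀ e ∈ E, σ e ∈ E ∧ σ (σ e) = e) →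
        (∀ e ∈ E, τ e ∈ E ∧ τ (τ e) = e) → (∃ e ∈ E, σ e ≠ e) →
        ∃ c : α → Bool, (∀ e ∈ E, σ e ≠ e → c (σ e) = !c e) ∧
          (∀ e ∈ E, τ e ≠ e → c (τ e) = !c e) := by
      rintro σ τ hσ hτ ⟨e, he, hne⟩
      obtain ⟨f, hf⟩ : ∃ f, f = σ e := ⟨_, rfl⟩
      have hfE : f ∈ E := hf ▸ (hσ e he).1
      have hfe : σ f = e := hf ▸ (hσ e he).2
      rw [← hf] at hne
      have hτe := hτ e he
      have hτf := hτ f hfE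
      obtain ⟨c, h1, h2⟩ := ih ((E.erase e).erase f)
        ((Finset.erase_subset _ _).trans_ssubset (Finset.erase_ssubset he)) σ
        (fun x => if τ x = e then (if τ f = f then x else τ f)
          else if τ x = f then (if τ e = e then x else τ e) else τ x)
        (by
          intro x hx
          simp only [Finset.mem_erase] at hx ⊢
          have := hσ x hx.2.2
          grind)
        (by
          intro x hx
          simp only [Finset.mem_erase] at hx ⊢
          have := hτ x hx.2.2
          grind)
      simp only [Finset.mem_erase] at h1 h2
      obtain ⟨b, hb⟩ : ∃ b : Bool, b = if τ e = f then true else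
        if τ e = e then c (τ f) else !c (τ e) := ⟨_, rfl⟩
      -- `e` must differ from its `τ`-partner, or, if it has none, from `f`.
      refine ⟨fun x => if x = e then b else if x = f then !b else c x, ?_, ?_⟩
      · intro x hx hxx
        have := hσ x hx
        have := h1 x
        grind
      · have hfar : ∀ x ∈ E, x ≠ e → x ≠ f → τ x ≠ e → τ x ≠ f → τ x ≠ x →
            c (τ x) = !c x := by
          intro x hx hxe hxf hte htf hne
          have := h2 x ⟨hxf, hxe, hx⟩
          simp only [if_neg hte, if_neg htf] at this
          exact this hne
        have hlink : τ e ≠ e → τ e ≠ f → τ f ≠ f → c (τ f) = !c (τ e) := by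
          intro hee hef hff
          have := h2 (τ e) ⟨hef, hee, hτe.1⟩
          simp only [hτe.2, if_true, if_neg hff] at this
          exact this fun h => hne (by rw [← hτf.2, h, hτe.2])
        intro x hx hxx
        have hx2 := (hτ x hx).2
        have hfx := hfar x hx
        clear h1 h2 hfar hσ hτ ih
        by_cases hxe : x = e
        · subst hxe
          grind
        by_cases hxf : x = f
        · subst hxf
          grind
        by_cases hte : τ x = e
        · have : x = τ e := by rw [← hte, hx2]
          grind
        by_cases htf : τ x = f
        · have : x = τ f := by rw [← htf, hx2]
          grind
        grind
    intro σ τ hσ hτ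
    by_cases h : ∃ e ∈ E, σ e ≠ e
    · exact key σ τ hσ hτ h
    · by_cases hτid : ∃ e ∈ E, τ e ≠ e
      · obtain ⟨c, h1, h2⟩ := key τ σ hτ hσ hτid
        exact ⟨c, h2, h1⟩
      · push Not at h hτid
        exact ⟨fun _ => true, fun e he hne => absurd (h e he) hne,
          fun e he hne => absurd (hτid e he) hne⟩

/-- If `c` separates all pairs of a pairing of the fibres of `a`, then each fibre is split evenly by
`c`, up to one element. -/
theorem fiber_balanced {α β : Type*} [DecidableEq α] [DecidableEq β] (a : α → β)
    (E : Finset α) (σ : α → α) (c : α → Bool)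
    (h1 : ∀ e ∈ E, σ e ∈ E ∧ σ (σ e) = e ∧ a (σ e) = a e)
    (h2 : ∀ e ∈ E, ∀ f ∈ E, a e = a f → σ e = e → σ f = f → e = f)
    (hc : ∀ e ∈ E, σ e ≠ e → c (σ e) = !c e) (x : β) :
    |2 * ((E.filter fun e => c e = true ∧ a e = x).card : ℤ)
      - ((E.filter fun e => a e = x).card : ℤ)| ≤ 1 := by
  have hsum : 2 * ((E.filter fun e => c e = true ∧ a e = x).card : ℤ)
      - ((E.filter fun e => a e = x).card : ℤ)
      = ∑ e ∈ E.filter (fun e => a e = x), (if c e = true then (1 : ℤ) else -1) := by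
    rw [Finset.card_filter, Finset.card_filter, Finset.sum_filter]
    push_cast
    rw [Finset.mul_sum, ← Finset.sum_sub_distrib]
    refine Finset.sum_congr rfl fun e _ => ?_
    by_cases hx : a e = x <;> by_cases hce : c e = true <;> simp [hx, hce]
  rw [hsum, ← Finset.sum_filter_add_sum_filter_not _ (fun e => σ e = e)]
  have hzero : ∑ e ∈ (E.filter (fun e => a e = x)).filter (fun e => ¬ σ e = e),
      (if c e = true then (1 : ℤ) else -1) = 0 := by
    refine Finset.sum_involution (fun e _ => σ e) ?_ ?_ ?_ ?_
    · intro e he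
      simp only [Finset.mem_filter] at he
      have := hc e he.1.1 he.2
      rw [this]; cases c e <;> simp
    · intro e he _
      simp only [Finset.mem_filter] at he
      exact he.2
    · intro e he
      simp only [Finset.mem_filter] at he ⊢
      have := h1 e he.1.1
      grind
    · intro e he
      simp only [Finset.mem_filter] at he
      exact (h1 e he.1.1).2.1
  have hcard : ((E.filter (fun e => a e = x)).filter (fun e => σ e = e)).card ≤ 1 := by
    rw [Finset.card_le_one]
    intro e he f hf
    simp only [Finset.mem_filter] at he hf
    exact h2 e he.1.1 f hf.1.1 (he.1.2.trans hf.1.2.symm) he.2 hf.2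
  rw [hzero, add_zero]
  refine (Finset.abs_sum_le_sum_abs _ _).trans ?_
  refine (Finset.sum_le_card_nsmul _ _ 1 fun e _ => ?_).trans ?_
  · split_ifs <;> simp
  · simpa using hcard

/-- The degree of `v` in the graph whose edges are the pairs in `E`, each edge being listed once, with
an arbitrary orientation. -/
def pairDegree {V : Type*} [DecidableEq V] (E : Finset (V × V)) (v : V) : ℕ :=
  (E.filter fun e => e.1 = v).card + (E.filter fun e => e.2 = v).card

/-- One halving step: `fst`-fibres and `snd`-fibres are both split up to an error of one, so degrees
are halved up to an error of one. -/
theorem exists_half {V : Type*} [DecidableEq V] (E : Finset (V × V)) :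
    ∃ E' ⊆ E, ∀ v, |2 * (pairDegree E' v : ℤ) - pairDegree E v| ≤ 2 := by
  obtain ⟨σ, hσ, hσ'⟩ := exists_pairing Prod.fst E
  obtain ⟨τ, hτ, hτ'⟩ := exists_pairing Prod.snd E
  obtain ⟨c, hcσ, hcτ⟩ := exists_alternating E σ τ
    (fun e he => ⟨(hσ e he).1, (hσ e he).2.1⟩) (fun e he => ⟨(hτ e he).1, (hτ e he).2.1⟩)
  refine ⟨E.filter fun e => c e = true, Finset.filter_subset _ _, fun v => ?_⟩
  have h1 := fiber_balanced Prod.fst E σ c hσ hσ' hcσ v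
  have h2 := fiber_balanced Prod.snd E τ c hτ hτ' hcτ v
  simp only [pairDegree, Finset.filter_filter]
  rw [abs_le] at *
  push_cast
  constructor <;> linarith [h1.1, h1.2, h2.1, h2.2]

/-- Iterated halving. The errors form a geometric series, so after any number of steps the degree
error stays below two. -/
theorem exists_pow_half {V : Type*} [DecidableEq V] (E : Finset (V × V)) (k : ℕ) :
    ∃ E' ⊆ E, ∀ v, |2 ^ k * (pairDegree E' v : ℤ) - pairDegree E v| ≤ 2 * 2 ^ k - 2 := by
  induction k with
  | zero => exact ⟨E, subset_rfl, fun v => by simp⟩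
  | succ k ih =>
    obtain ⟨E₁, hE₁, h₁⟩ := ih
    obtain ⟨E₂, hE₂, h₂⟩ := exists_half E₁
    refine ⟨E₂, hE₂.trans hE₁, fun v => ?_⟩
    have h1 := abs_le.1 (h₁ v)
    have h2 := abs_le.1 (h₂ v)
    have hp : (0 : ℤ) < 2 ^ k := by positivity
    rw [abs_le, pow_succ]
    constructor <;> nlinarith [h1.1, h1.2, h2.1, h2.2]

/-- Every finite graph has a subgraph whose degrees are `2⁻ᵏ` times the original ones, up to an
additive error of two. -/
theorem exists_sparse_subgraph {V : Type*} [Fintype V] (G : SimpleGraph V) [DecidableRel G.Adj]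
    (k : ℕ) : ∃ F : SimpleGraph V, F ≤ G ∧ ∀ v,
      |2 ^ k * ((F.neighborSet v).ncard : ℝ) - G.degree v| ≤ 2 * 2 ^ k := by
  classical
  let : LinearOrder V := linearOrderOfSTO WellOrderingRel
  -- Edges are oriented upwards along an arbitrary linear order, so that each is listed once.
  have hdeg : ∀ (H : SimpleGraph V) (E : Finset (V × V)),
      (∀ e ∈ E, e.1 < e.2) → (∀ u v, H.Adj u v ↔ (u, v) ∈ E ∨ (v, u) ∈ E) →
      ∀ v, (H.neighborSet v).ncard = pairDegree E v := by
    intro H E hlt hH v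
    have hset : H.neighborSet v = ↑((E.filter fun e => e.1 = v).image Prod.snd ∪
        (E.filter fun e => e.2 = v).image Prod.fst) := by
      ext u
      simp [hH]
    rw [hset, Set.ncard_coe_finset, Finset.card_union_of_disjoint, Finset.card_image_of_injOn,
      Finset.card_image_of_injOn, pairDegree]
    · rintro ⟨a, b⟩ h ⟨a', b'⟩ h' hab
      simp_all
    · rintro ⟨a, b⟩ h ⟨a', b'⟩ h' hab
      simp_all
    · rw [Finset.disjoint_left]
      intro u hu hu'
      simp only [Finset.mem_image, Finset.mem_filter, Prod.exists, exists_eq_right,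
        exists_and_right] at hu hu'
      have h1 : (v, u) ∈ E := by grind
      have h2 : (u, v) ∈ E := by grind
      exact lt_asymm (hlt _ h1) (hlt _ h2)
  obtain ⟨E', hE', h⟩ := exists_pow_half
    (Finset.univ.filter fun e : V × V => G.Adj e.1 e.2 ∧ e.1 < e.2) k
  have hmem : ∀ e ∈ E', G.Adj e.1 e.2 ∧ e.1 < e.2 := fun e he => by simpa using hE' he
  let F : SimpleGraph V :=
    { Adj := fun u v => (u, v) ∈ E' ∨ (v, u) ∈ E'
      symm := ⟨fun u v huv => huv.symm⟩
      loopless := ⟨fun v hv => by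
        rcases hv with hv | hv <;> exact lt_irrefl _ (hmem _ hv).2⟩ }
  refine ⟨F, ?_, fun v => ?_⟩
  · rintro u v (huv | huv)
    · exact (hmem _ huv).1
    · exact (hmem _ huv).1.symm
  · have hF := hdeg F E' (fun e he => (hmem e he).2) (fun _ _ => Iff.rfl) v
    have hG := hdeg G (Finset.univ.filter fun e : V × V => G.Adj e.1 e.2 ∧ e.1 < e.2)
      (fun e he => by simp at he; exact he.2) (fun u w => by
        simp only [Finset.mem_filter, Finset.mem_univ, true_and]
        constructor
        · intro huw
          rcases lt_or_gt_of_ne huw.ne with h | h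
          · exact Or.inl ⟨huw, h⟩
          · exact Or.inr ⟨huw.symm, h⟩
        · rintro (h | h)
          · exact h.1
          · exact h.1.symm) v
    have hcard : (G.neighborSet v).ncard = G.degree v := by
      rw [Set.ncard_eq_toFinset_card', ← G.card_neighborFinset_eq_degree]
      rfl
    have hv := h v
    rw [← hF, ← hG, hcard] at hv
    have : |(2 : ℝ) ^ k * ((F.neighborSet v).ncard : ℝ) - G.degree v| ≤ 2 * 2 ^ k - 2 := by
      exact_mod_cast hv
    linarith

theorem eventually_large : ∀ᶠ Δ : ℕ in Filter.atTop, 6 ≤ Real.log Δ ∧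
    4 * Real.log Δ ^ 2 ≤ (Δ : ℝ) ^ ((1 : ℝ) / 3) := by
  have h1 : ∀ᶠ x : ℝ in Filter.atTop, 6 ≤ Real.log x :=
    Real.tendsto_log_atTop.eventually_ge_atTop 6
  have h2 := (isLittleO_log_rpow_rpow_atTop (s := (1 : ℝ) / 3) 2 (by norm_num)).bound
    (show (0 : ℝ) < 1 / 4 by norm_num)
  refine tendsto_natCast_atTop_atTop.eventually (p := fun x : ℝ => 6 ≤ Real.log x ∧
    4 * Real.log x ^ 2 ≤ x ^ ((1 : ℝ) / 3)) ?_
  filter_upwards [h1, h2, Filter.eventually_ge_atTop 0] with x hx hx2 hx0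
  refine ⟨hx, ?_⟩
  rw [Real.norm_of_nonneg (by positivity), Real.norm_of_nonneg (by positivity)] at hx2
  have : Real.log x ^ (2 : ℝ) = Real.log x ^ 2 := by norm_cast
  rw [this] at hx2
  linarith

theorem claim_subgraph_F :
    ∃ Δ₀ : ℕ, ∀ Δ : ℕ, Δ₀ ≤ Δ →
      ∀ (V : Type) [Fintype V] (G₁ : SimpleGraph V) [DecidableRel G₁.Adj] (B S : Set V),
        B ∪ S = Set.univ → Disjoint B S →
        (∀ v : V, G₁.degree v ≤ Δ) →
        (∀ v ∈ B, (Δ : ℝ) ^ ((2 : ℝ) / 3) * Real.log Δ ^ 4 / 4 ≤ (G₁.degree v : ℝ)) →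
        (∀ v ∈ S, (G₁.degree v : ℝ) ≤ (Δ : ℝ) ^ ((2 : ℝ) / 3) * Real.log Δ ^ 4) →
        ∃ F : SimpleGraph V, F ≤ G₁ ∧
          (∀ v ∈ B, Real.log Δ ^ 2 / 8 ≤ ((F.neighborSet v).ncard : ℝ) ∧
            ((F.neighborSet v).ncard : ℝ) ≤ 2 * (Δ : ℝ) ^ ((1 : ℝ) / 3) / Real.log Δ ^ 2) ∧
          (∀ v ∈ S, ((F.neighborSet v).ncard : ℝ) ≤ 2 * Real.log Δ ^ 2) := by
  obtain ⟨Δ₀, hΔ₀⟩ := Filter.eventually_atTop.1 eventually_large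
  refine ⟨Δ₀, fun Δ hΔ V _ G₁ _ B S _ _ hmax hB hS => ?_⟩
  obtain ⟨hL, hr⟩ := hΔ₀ Δ hΔ
  have hΔ2 : (Δ : ℝ) ^ ((2 : ℝ) / 3) = ((Δ : ℝ) ^ ((1 : ℝ) / 3)) ^ 2 := by
    rw [← Real.rpow_natCast, ← Real.rpow_mul (Nat.cast_nonneg _)]; norm_num
  have hΔ3 : (Δ : ℝ) = ((Δ : ℝ) ^ ((1 : ℝ) / 3)) ^ 3 := by
    rw [← Real.rpow_natCast, ← Real.rpow_mul (Nat.cast_nonneg _)]; norm_num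
  have hmax' : ∀ v : V, (G₁.degree v : ℝ) ≤ ((Δ : ℝ) ^ ((1 : ℝ) / 3)) ^ 3 := fun v => by
    rw [← hΔ3]; exact_mod_cast hmax v
  rw [hΔ2] at hB hS
  -- Only `r = Δ^(1/3)` and `L = log Δ` matter from here on.
  generalize (Δ : ℝ) ^ ((1 : ℝ) / 3) = r at *
  generalize Real.log (Δ : ℝ) = L at *
  have hL2 : 36 ≤ L ^ 2 := by nlinarith
  have hr1 : 1 ≤ r := by linarith
  have hX : 1 ≤ 4 / 3 * (r ^ 2 * L ^ 2) := by nlinarith [one_le_pow₀ hr1 (n := 2)]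
  -- `2 ^ k` lies between `2/3` and `4/3` of the ideal sparsification factor `Δ^(2/3) * (log Δ)^2`.
  obtain ⟨k, hk1, hk2⟩ := exists_nat_pow_near hX (one_lt_two)
  rw [pow_succ 2 k] at hk2
  obtain ⟨F, hF, h⟩ := exists_sparse_subgraph G₁ k
  have hN : (0 : ℝ) < 2 ^ k := by positivity
  generalize (2 : ℝ) ^ k = N at *
  have hlow : ∀ v, (G₁.degree v : ℝ) ≤ N * ((F.neighborSet v).ncard + 2) := fun v => by
    linarith [(abs_le.1 (h v)).1]
  have hupp : ∀ v, N * ((F.neighborSet v).ncard - 2 : ℝ) ≤ G₁.degree v := fun v => by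
    linarith [(abs_le.1 (h v)).2]
  have hrL : 0 < r ^ 2 * L ^ 2 := by positivity
  refine ⟨F, hF, fun v hv => ⟨?_, ?_⟩, fun v hv => ?_⟩
  · have h1 := hB v hv
    have h2 := hlow v
    have h3 : r ^ 2 * L ^ 2 * (3 / 16 * L ^ 2) ≤
        r ^ 2 * L ^ 2 * ((F.neighborSet v).ncard + 2) := by
      have := mul_le_mul_of_nonneg_right hk1
        (show (0 : ℝ) ≤ (F.neighborSet v).ncard + 2 by positivity)
      nlinarith
    have h4 := le_of_mul_le_mul_left h3 hrL
    linarith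
  · rw [le_div_iff₀ (by positivity)]
    by_contra! hcon
    have h2 := (hupp v).trans (hmax' v)
    have h3 : 3 / 2 * r < ((F.neighborSet v).ncard - 2 : ℝ) * L ^ 2 := by linarith
    have h4 : (0 : ℝ) < (F.neighborSet v).ncard - 2 := by
      by_contra! hneg
      nlinarith
    have h5 := mul_lt_mul_of_pos_right hk2 h4
    have h6 := mul_lt_mul_of_pos_left h3 (show 0 < r ^ 2 by positivity)
    nlinarith
  · by_contra! hcon
    have h2 := (hupp v).trans (hS v hv)
    have h3 : 3 / 2 * L ^ 2 < ((F.neighborSet v).ncard - 2 : ℝ) := by linarith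
    have h4 : (0 : ℝ) < (F.neighborSet v).ncard - 2 := by linarith
    have h5 := mul_lt_mul_of_pos_right hk2 h4
    have h6 := mul_lt_mul_of_pos_left h3 hrL
    nlinarith
end

section
/- There exists Δ₀ such that the following holds for every Δ ≥ Δ₀. Let G be a graph of maximum degree at most Δ, let B be a set of vertices of G, let F be a subgraph of G such that every vertex of F has degree at most 2·Δ^{1/3}/(log Δ)^2 in F and every u ∈ B has degree at least (1/8)·(log Δ)^2 in F (log denoting the natural logarithm), and let t = ⌈Δ^{1/3}⌉. Then there exists an edge colouring c' : E(F) → {1, …, t} such that for every ordered pair (u, v) of vertices of B adjacent in G, the set I_{u,v} of all x ∈ N_F(u) \ {v} satisfying: c'(ux) ≠ c'(uz) for every z ∈ N_F(u) with z ≠ x, c'(ux) ≠ c'(xz) for every z ∈ N_F(x) with z ≠ u, and c'(ux) ≠ c'(vy) for every y ∈ N_F(v), has size at least (1/4)·d_F(u) − 1. -/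
open Finset

/-! ### Resampling colours -/

section Counting

variable {E : Type*} [DecidableEq E] {t : ℕ}

open Classical in
/-- If neither `P` nor the list of colours `pal` depends on the colour of `e`, then at most a
fraction `D / t` of the colourings satisfying `P` gives `e` a colour from `pal`. -/
lemma card_resample_one [Fintype E] (e : E) (P : (E → Fin t) → Prop) (pal : (E → Fin t) → Finset (Fin t))
    (D : ℕ) (hP : ∀ c a, P c → P (Function.update c e a))
    (hpal : ∀ c a, pal (Function.update c e a) = pal c) (hD : ∀ c, (pal c).card ≤ D) :
    (univ.filter fun c => P c ∧ c e ∈ pal c).card * t ≤ D * (univ.filter P).card := by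
  have h1 : ((univ.filter fun c => P c ∧ c e ∈ pal c) ×ˢ (univ : Finset (Fin t))).card ≤
      ((univ.filter P).sigma pal).card := by
    -- `(c, a)` is recovered from `c` recoloured at `e` by `a` together with the old colour `c e`.
    refine Finset.card_le_card_of_injOn
      (fun p => (⟨Function.update p.1 e p.2, p.1 e⟩ : Σ _ : E → Fin t, Fin t)) ?_ ?_
    · rintro ⟨c, a⟩ h
      simp only [coe_product, Set.mem_prod, mem_coe, mem_filter, mem_univ, true_and,
        and_true] at h
      simp only [mem_coe, mem_sigma, mem_filter, mem_univ, true_and]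
      exact ⟨hP _ _ h.1, by rw [hpal]; exact h.2⟩
    · rintro ⟨c, a⟩ - ⟨c', a'⟩ - h
      simp only [Sigma.mk.injEq, heq_eq_eq] at h
      obtain ⟨h, h'⟩ := h
      have ha : a = a' := by simpa using congrFun h e
      refine Prod.ext ?_ ha
      funext f
      by_cases hf : f = e
      · subst hf; exact h'
      · simpa [hf] using congrFun h f
  rw [card_product, card_univ, Fintype.card_fin, card_sigma] at h1
  refine h1.trans ((Finset.sum_le_card_nsmul _ _ D fun c _ => hD c).trans ?_)
  rw [smul_eq_mul, mul_comm]

open Classical in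
lemma card_resample [Fintype E] (X : Finset E) (P : (E → Fin t) → Prop)
    (pal : (E → Fin t) → Finset (Fin t)) (D : ℕ)
    (hP : ∀ c, ∀ e ∈ X, ∀ a, P c → P (Function.update c e a))
    (hpal : ∀ c, ∀ e ∈ X, ∀ a, pal (Function.update c e a) = pal c)
    (hD : ∀ c, (pal c).card ≤ D) :
    (univ.filter fun c => P c ∧ ∀ f ∈ X, c f ∈ pal c).card * t ^ X.card ≤
      D ^ X.card * (univ.filter P).card := by
  induction X using Finset.induction_on with
  | empty => simp
  | insert e X he ih =>
    have ih := ih (fun c f hf => hP c f (mem_insert_of_mem hf))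
      (fun c f hf => hpal c f (mem_insert_of_mem hf))
    have h1 := card_resample_one e (fun c => P c ∧ ∀ f ∈ X, c f ∈ pal c) pal D
      (fun c a h => ⟨hP c e (mem_insert_self _ _) a h.1, fun f hf => by
        have hne : f ≠ e := fun h => he (h ▸ hf)
        rw [hpal c e (mem_insert_self _ _), Function.update_of_ne hne]
        exact h.2 f hf⟩)
      (fun c a => hpal c e (mem_insert_self _ _) a) hD
    have h2 : (univ.filter fun c => P c ∧ ∀ f ∈ insert e X, c f ∈ pal c) =
        univ.filter fun c => (P c ∧ ∀ f ∈ X, c f ∈ pal c) ∧ c e ∈ pal c := by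
      ext c
      simp only [mem_filter, mem_univ, true_and, forall_mem_insert]
      tauto
    rw [h2, card_insert_of_notMem he, pow_succ, pow_succ]
    calc _ = ((univ.filter fun c => (P c ∧ ∀ f ∈ X, c f ∈ pal c) ∧ c e ∈ pal c).card * t)
            * t ^ X.card := by ring
      _ ≤ (D * (univ.filter fun c => P c ∧ ∀ f ∈ X, c f ∈ pal c).card) * t ^ X.card :=
          Nat.mul_le_mul_right _ (by convert h1)
      _ = D * ((univ.filter fun c => P c ∧ ∀ f ∈ X, c f ∈ pal c).card * t ^ X.card) := by ring
      _ ≤ D * (D ^ X.card * (univ.filter P).card) := Nat.mul_le_mul_left _ ih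
      _ = _ := by ring

/-! ### Valid colourings of an edge set -/

variable {V : Type*}

/-- `c` is valid on the edge set `S`: edges of `S` sharing a vertex have distinct colours, and for
each `(u, v) ∈ P` no `k u` edges of `S` at `u` but not at `v` have all their colours on edges of `S`
at `v`.  The graph enters only through `A`, where `A v` is the set of edges at `v`. -/
def Valid (A : V → Finset E) (P : Finset (V × V)) (k : V → ℕ) (S : Finset E)
    (c : E → Fin t) : Prop :=
  (∀ v, ∀ e ∈ S, ∀ g ∈ S, e ∈ A v → g ∈ A v → e ≠ g → c e ≠ c g) ∧
  ∀ p ∈ P, ∀ X ⊆ S ∩ (A p.1 \ A p.2), X.card = k p.1 →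
    ¬ ∀ f ∈ X, c f ∈ (S ∩ A p.2).image c

open Classical in
/-- The number of maps from all of `E` to the colours that are valid on `S`. -/
noncomputable def validCount [Fintype E] (t : ℕ) (A : V → Finset E) (P : Finset (V × V)) (k : V → ℕ)
    (S : Finset E) : ℕ :=
  (univ.filter fun c : E → Fin t => Valid A P k S c).card

variable {A : V → Finset E} {P : Finset (V × V)} {k : V → ℕ}

lemma Valid.mono {S T : Finset E} {c : E → Fin t} (h : Valid A P k S c) (hT : T ⊆ S) :
    Valid A P k T c := by
  refine ⟨fun v e he g hg => h.1 v e (hT he) g (hT hg), fun p hp X hX hk hc => ?_⟩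
  refine h.2 p hp X (hX.trans (inter_subset_inter_right hT)) hk fun f hf => ?_
  exact image_subset_image (inter_subset_inter_right hT) (hc f hf)

lemma Valid.congr {S : Finset E} {c c' : E → Fin t} (h : Valid A P k S c)
    (hc : ∀ f ∈ S, c' f = c f) : Valid A P k S c' := by
  refine ⟨fun v e he g hg => ?_, fun p hp X hX hk hc' => ?_⟩
  · rw [hc e he, hc g hg]; exact h.1 v e he g hg
  · refine h.2 p hp X hX hk fun f hf => ?_
    have h1 := hc' f hf
    rw [hc f (mem_inter.1 (hX hf)).1] at h1
    rwa [image_congr (g := c) fun g hg => hc g (mem_inter.1 hg).1] at h1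

lemma Valid.update {S : Finset E} {c : E → Fin t} (h : Valid A P k S c) {e : E} (he : e ∉ S)
    (a : Fin t) : Valid A P k S (Function.update c e a) :=
  h.congr fun _ hf => Function.update_of_ne (ne_of_mem_of_not_mem hf he) _ _

lemma image_update {S : Finset E} {c : E → Fin t} {e : E} (he : e ∉ S) (a : Fin t) :
    S.image (Function.update c e a) = S.image c :=
  image_congr fun _ hf => Function.update_of_ne (ne_of_mem_of_not_mem hf he) _ _

/-- Adding one edge at most halves the number of valid colourings.  The hypothesis `hR` is the
bound that this lemma yields for `S` by iteration; `q` bounds the share of the colourings lost to a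
single pair. -/
lemma validCount_step [Fintype E] [Fintype V] {D M : ℕ} {q : ℝ} (ht : 0 < t) (hA : ∀ v, (A v).card ≤ D)
    (hadj : ∀ e, ((univ.filter fun v => e ∈ A v).biUnion A).card ≤ 2 * D)
    (hM : ∀ e, (P.filter fun p => e ∈ A p.1 ∨ e ∈ A p.2).card ≤ M)
    (hDt : 8 * D ≤ t)
    (hq : ∀ p ∈ P, (2 : ℝ) ^ (A p.1).card * (2 * D / t : ℝ) ^ k p.1 ≤ q)
    (hq0 : 0 ≤ q) (hMq : M * q ≤ 1 / 4)
    {S : Finset E} {e : E} (he : e ∉ S)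
    (hR : ∀ T ⊆ S, (validCount t A P k T : ℝ) ≤ 2 ^ (S \ T).card * validCount t A P k S) :
    (validCount t A P k S : ℝ) ≤ 2 * validCount t A P k (insert e S) := by
  classical
  set n : ℝ := (validCount t A P k S : ℝ) with hn
  have hn0 : 0 ≤ n := Nat.cast_nonneg _
  have ht' : (0 : ℝ) < t := by exact_mod_cast ht
  -- Colourings lost because `e` gets the colour of an edge meeting it.
  set bad1 : Finset (E → Fin t) := univ.filter fun c => Valid A P k S c ∧
    c e ∈ (S ∩ (univ.filter fun v => e ∈ A v).biUnion A).image c with hbad1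
  -- Colourings lost because of the pair `p` and the set `X` of edges.
  set bad2 : V × V → Finset E → Finset (E → Fin t) := fun p X => univ.filter fun c =>
    Valid A P k (S \ X) c ∧ ∀ f ∈ X, c f ∈ (insert e S ∩ A p.2).image c with hbad2
  have hcover : (univ.filter fun c : E → Fin t => Valid A P k S c) ⊆
      (univ.filter fun c : E → Fin t => Valid A P k (insert e S) c) ∪ (bad1 ∪
        (P.filter fun p => e ∈ A p.1 ∨ e ∈ A p.2).biUnion fun p =>
          ((A p.1 \ A p.2).powersetCard (k p.1)).biUnion fun X => bad2 p X) := by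
    intro c hc
    have hc : Valid A P k S c := (mem_filter.1 hc).2
    by_contra hcon
    simp only [mem_union, not_or] at hcon
    obtain ⟨h0, h1, h2⟩ := hcon
    have h1 : ∀ v, e ∈ A v → ∀ g ∈ S, g ∈ A v → c g ≠ c e := by
      intro v hv g hg hgv hcg
      refine h1 ?_
      rw [hbad1, mem_filter]
      refine ⟨mem_univ _, hc, mem_image.2 ⟨g, mem_inter.2 ⟨hg, mem_biUnion.2 ⟨v, ?_, hgv⟩⟩, hcg⟩⟩
      simpa using hv
    refine h0 (mem_filter.2 ⟨mem_univ _, ?_, ?_⟩)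
    · intro v f hf g hg hfv hgv hne
      rcases mem_insert.1 hf with rfl | hfS
      · rcases mem_insert.1 hg with rfl | hg
        · exact absurd rfl hne
        · exact (h1 v hfv g hg hgv).symm
      · rcases mem_insert.1 hg with rfl | hg
        · exact h1 v hgv f hfS hfv
        · exact hc.1 v f hfS g hg hfv hgv hne
    · intro p hp X hX hk hcX
      by_cases hep : e ∈ A p.1 ∨ e ∈ A p.2
      · refine h2 (mem_biUnion.2 ⟨p, mem_filter.2 ⟨hp, hep⟩, mem_biUnion.2 ⟨X, ?_, ?_⟩⟩)
        · exact mem_powersetCard.2 ⟨hX.trans inter_subset_right, hk⟩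
        · exact mem_filter.2 ⟨mem_univ _, hc.mono sdiff_subset, hcX⟩
      · -- A pair away from `e` sees the same edges in `S` and in `insert e S`.
        rw [not_or] at hep
        refine hc.2 p hp X (fun f hf => ?_) hk ?_
        · have := hX hf
          simp only [mem_inter, mem_insert, mem_sdiff] at this ⊢
          refine ⟨this.1.resolve_left ?_, this.2⟩
          rintro rfl
          exact hep.1 this.2.1
        · rwa [insert_inter_of_notMem hep.2] at hcX
  have hb1 : (bad1.card : ℝ) ≤ n / 4 := by
    have h := card_resample_one e (fun c : E → Fin t => Valid A P k S c)
      (fun c => (S ∩ (univ.filter fun v => e ∈ A v).biUnion A).image c) (2 * D)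
      (fun c a h => h.update he a)
      (fun c a => image_update (fun h => he (mem_inter.1 h).1) a)
      (fun c => card_image_le.trans ((card_le_card inter_subset_right).trans (hadj e)))
    have h : (bad1.card : ℝ) * t ≤ 2 * D * n := by
      rw [hn]; unfold validCount; exact_mod_cast h
    have hDt' : (8 : ℝ) * D ≤ t := by exact_mod_cast hDt
    have : (bad1.card : ℝ) * t ≤ n / 4 * t := by nlinarith
    exact le_of_mul_le_mul_right this ht'
  have hb2 : ∀ p ∈ P, ∀ X ∈ (A p.1 \ A p.2).powersetCard (k p.1),
      ((bad2 p X).card : ℝ) ≤ (2 * D / t : ℝ) ^ k p.1 * n := by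
    intro p hp X hX
    obtain ⟨hX, hk⟩ := mem_powersetCard.1 hX
    have h := card_resample X (fun c : E → Fin t => Valid A P k (S \ X) c)
      (fun c => (insert e S ∩ A p.2).image c) D
      (fun c f hf a h => h.update (fun h => (mem_sdiff.1 h).2 hf) a)
      (fun c f hf a => image_update
        (fun h => (mem_sdiff.1 (hX hf)).2 (mem_inter.1 h).2) a)
      (fun c => card_image_le.trans ((card_le_card inter_subset_right).trans (hA _)))
    have h : ((bad2 p X).card : ℝ) * t ^ k p.1 ≤ D ^ k p.1 * validCount t A P k (S \ X) := by
      rw [← hk]; unfold validCount; exact_mod_cast h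
    have h2 : (validCount t A P k (S \ X) : ℝ) ≤ 2 ^ k p.1 * n := by
      refine (hR _ sdiff_subset).trans (mul_le_mul_of_nonneg_right ?_ hn0)
      refine pow_le_pow_right₀ one_le_two ?_
      rw [← hk]
      exact card_le_card fun f hf => by
        simp only [mem_sdiff, not_and, not_not] at hf
        exact hf.2 hf.1
    rw [div_pow, mul_pow, div_mul_eq_mul_div, le_div_iff₀ (by positivity)]
    calc _ ≤ _ := h
      _ ≤ D ^ k p.1 * (2 ^ k p.1 * n) := mul_le_mul_of_nonneg_left h2 (by positivity)
      _ = _ := by ring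
  have hb2' : ∀ p ∈ P, ((((A p.1 \ A p.2).powersetCard (k p.1)).biUnion fun X => bad2 p X).card : ℝ)
      ≤ q * n := by
    intro p hp
    calc ((((A p.1 \ A p.2).powersetCard (k p.1)).biUnion fun X => bad2 p X).card : ℝ)
        ≤ ∑ X ∈ (A p.1 \ A p.2).powersetCard (k p.1), ((bad2 p X).card : ℝ) := by
          exact_mod_cast card_biUnion_le
      _ ≤ ((A p.1 \ A p.2).powersetCard (k p.1)).card • ((2 * D / t : ℝ) ^ k p.1 * n) :=
          sum_le_card_nsmul _ _ _ (hb2 p hp)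
      _ ≤ 2 ^ (A p.1).card * ((2 * D / t : ℝ) ^ k p.1 * n) := by
          rw [nsmul_eq_mul]
          refine mul_le_mul_of_nonneg_right ?_ (by positivity)
          have : ((A p.1 \ A p.2).powersetCard (k p.1)).card ≤ 2 ^ (A p.1).card := by
            rw [card_powersetCard]
            exact (Nat.choose_le_two_pow _ _).trans
              (Nat.pow_le_pow_right two_pos (card_le_card sdiff_subset))
          exact_mod_cast this
      _ ≤ q * n := by
          rw [← mul_assoc]
          exact mul_le_mul_of_nonneg_right (hq p hp) hn0
  have hb3 : (((P.filter fun p => e ∈ A p.1 ∨ e ∈ A p.2).biUnion fun p =>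
      ((A p.1 \ A p.2).powersetCard (k p.1)).biUnion fun X => bad2 p X).card : ℝ) ≤ n / 4 := by
    calc _ ≤ ∑ p ∈ P.filter fun p => e ∈ A p.1 ∨ e ∈ A p.2,
            ((((A p.1 \ A p.2).powersetCard (k p.1)).biUnion fun X => bad2 p X).card : ℝ) := by
          exact_mod_cast card_biUnion_le
      _ ≤ (P.filter fun p => e ∈ A p.1 ∨ e ∈ A p.2).card • (q * n) :=
          sum_le_card_nsmul _ _ _ fun p hp => hb2' p (mem_filter.1 hp).1
      _ ≤ M * (q * n) := by
          rw [nsmul_eq_mul]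
          exact mul_le_mul_of_nonneg_right (by exact_mod_cast hM e) (by positivity)
      _ ≤ n / 4 := by nlinarith
  have hfin := (card_le_card hcover).trans
    ((card_union_le _ _).trans (Nat.add_le_add_left (card_union_le _ _) _))
  have hfin : n ≤ validCount t A P k (insert e S) + (bad1.card +
      (((P.filter fun p => e ∈ A p.1 ∨ e ∈ A p.2).biUnion fun p =>
        ((A p.1 \ A p.2).powersetCard (k p.1)).biUnion fun X => bad2 p X).card : ℝ)) := by
    rw [hn]; unfold validCount; exact_mod_cast hfin
  linarith

lemma exists_valid [Fintype E] [Fintype V] {D M : ℕ} {q : ℝ} (ht : 0 < t) (hA : ∀ v, (A v).card ≤ D)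
    (hadj : ∀ e, ((univ.filter fun v => e ∈ A v).biUnion A).card ≤ 2 * D)
    (hM : ∀ e, (P.filter fun p => e ∈ A p.1 ∨ e ∈ A p.2).card ≤ M)
    (hDt : 8 * D ≤ t) (hk : ∀ p ∈ P, 0 < k p.1)
    (hq : ∀ p ∈ P, (2 : ℝ) ^ (A p.1).card * (2 * D / t : ℝ) ^ k p.1 ≤ q)
    (hq0 : 0 ≤ q) (hMq : M * q ≤ 1 / 4) :
    ∃ c : E → Fin t, Valid A P k univ c := by
  classical
  have key : ∀ S : Finset E, ∀ T ⊆ S,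
      (validCount t A P k T : ℝ) ≤ 2 ^ (S \ T).card * validCount t A P k S := by
    intro S
    induction S using Finset.strongInduction with
    | H S ih =>
      intro T hT
      rcases eq_or_ssubset_of_subset hT with rfl | hT'
      · simp
      obtain ⟨e, heS, heT⟩ := exists_of_ssubset hT'
      have hR := ih (S.erase e) (erase_ssubset heS)
      have h1 := hR T (subset_erase.2 ⟨hT, heT⟩)
      have h2 := validCount_step ht hA hadj hM hDt hq hq0 hMq (notMem_erase e S) hR
      rw [insert_erase heS] at h2
      have h3 : (S \ T).card = ((S.erase e) \ T).card + 1 := by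
        rw [erase_sdiff_comm, card_erase_add_one (mem_sdiff.2 ⟨heS, heT⟩)]
      rw [h3, pow_succ, mul_assoc]
      exact h1.trans (mul_le_mul_of_nonneg_left h2 (by positivity))
  have h0 : 0 < validCount t A P k ∅ := by
    refine card_pos.2 ⟨fun _ => ⟨0, ht⟩, mem_filter.2 ⟨mem_univ _, by simp, ?_⟩⟩
    intro p hp X hX hXk
    rw [empty_inter, subset_empty] at hX
    subst hX
    exact absurd hXk (hk p hp).ne
  have h1 := key univ ∅ (empty_subset _)
  have h2 : 0 < validCount t A P k univ := by
    by_contra h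
    have : validCount t A P k univ = 0 := by omega
    rw [this] at h1
    have : (0 : ℝ) < validCount t A P k ∅ := by exact_mod_cast h0
    simp at h1
    linarith
  obtain ⟨c, hc⟩ := card_pos.1 h2
  exact ⟨c, (mem_filter.1 hc).2⟩

end Counting

/-! ### Numerical estimates and the graph -/

/-- The share of colourings lost to one pair, when `d` is the degree and `L = log Δ`. -/
lemma pair_share_le {D t d : ℕ} {L : ℝ} (ht : 0 < t) (hL : 32 ≤ L) (hD : D * L ^ 2 ≤ 2 * t)
    (hd : L ^ 2 / 8 ≤ d) :
    (2 : ℝ) ^ d * (2 * D / t : ℝ) ^ ((d + 1) / 2) ≤ Real.exp (-(2 * L)) := by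
  have ht' : (0 : ℝ) < t := by exact_mod_cast ht
  have hk : d ≤ 2 * ((d + 1) / 2) := by omega
  have hk' : (d : ℝ) ≤ 2 * (((d + 1) / 2 : ℕ) : ℝ) := by exact_mod_cast hk
  set k := (d + 1) / 2
  have hbase : (8 * D / t : ℝ) ≤ Real.exp (-1) := by
    have h1 : (8 * D / t : ℝ) ≤ 1 / 4 := by
      have h3 : (1024 : ℝ) ≤ L ^ 2 := by nlinarith
      rw [div_le_iff₀ ht']
      linarith [mul_le_mul_of_nonneg_left h3 (Nat.cast_nonneg D : (0 : ℝ) ≤ D)]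
    have h2 : (1 / 4 : ℝ) ≤ Real.exp (-1) := by
      rw [Real.exp_neg, one_div]
      exact inv_anti₀ (Real.exp_pos _) (by linarith [Real.exp_one_lt_d9])
    exact h1.trans h2
  calc (2 : ℝ) ^ d * (2 * D / t : ℝ) ^ k ≤ 2 ^ (2 * k) * (2 * D / t : ℝ) ^ k :=
        mul_le_mul_of_nonneg_right (pow_le_pow_right₀ one_le_two hk) (by positivity)
    _ = (8 * D / t : ℝ) ^ k := by rw [pow_mul, ← mul_pow]; congr 1; ring
    _ ≤ Real.exp (-1) ^ k := pow_le_pow_left₀ (by positivity) hbase _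
    _ = Real.exp (-k) := by rw [← Real.exp_nat_mul]; congr 1; ring
    _ ≤ Real.exp (-(2 * L)) := Real.exp_le_exp.2 (by nlinarith)

open Classical in
/-- The edges of `F` at `v`. -/
noncomputable def edgesAt {V : Type*} [Fintype V] (F : SimpleGraph V) (v : V) :
    Finset (Sym2 V) :=
  (univ.filter (F.Adj v)).image fun x => s(v, x)

lemma mk_injective {V : Type*} (v : V) : Function.Injective fun x : V => s(v, x) :=
  fun _ _ h => Sym2.congr_right.1 h

section Graph

variable {V : Type*} [Fintype V] {F : SimpleGraph V}

lemma mem_edgesAt {v : V} {e : Sym2 V} : e ∈ edgesAt F v ↔ ∃ x, F.Adj v x ∧ s(v, x) = e := by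
  simp [edgesAt]

lemma mk_mem_edgesAt {v x : V} (h : F.Adj v x) : s(v, x) ∈ edgesAt F v :=
  mem_edgesAt.2 ⟨x, h, rfl⟩

lemma mk_mem_edgesAt_right {v x : V} (h : F.Adj v x) : s(v, x) ∈ edgesAt F x :=
  mem_edgesAt.2 ⟨v, h.symm, Sym2.eq_swap⟩

lemma mem_of_mem_edgesAt {v : V} {e : Sym2 V} (h : e ∈ edgesAt F v) : v ∈ e := by
  obtain ⟨x, -, rfl⟩ := mem_edgesAt.1 h
  exact Sym2.mem_mk_left _ _

lemma card_edgesAt (v : V) : (edgesAt F v).card = (F.neighborSet v).ncard := by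
  classical
  rw [edgesAt, card_image_of_injective _ (mk_injective v), ← Set.ncard_coe_finset]
  congr 1
  ext x
  simp

open Classical in
lemma card_ends_le (e : Sym2 V) : (univ.filter fun v => e ∈ edgesAt F v).card ≤ 2 := by
  induction e using Sym2.ind with
  | _ a b =>
    refine (card_le_card (t := {a, b}) fun v hv => ?_).trans card_le_two
    simpa using mem_of_mem_edgesAt (mem_filter.1 hv).2

end Graph

theorem claim_coloring_of_F :
    ∃ Δ₀ : ℕ, ∀ Δ : ℕ, Δ₀ ≤ Δ →
      ∀ (V : Type) [Fintype V] (G : SimpleGraph V) [DecidableRel G.Adj]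
        (B : Set V) (F : SimpleGraph V),
        F ≤ G → (∀ v : V, G.degree v ≤ Δ) →
        (∀ v : V, ((F.neighborSet v).ncard : ℝ) ≤
          2 * (Δ : ℝ) ^ ((1 : ℝ) / 3) / Real.log Δ ^ 2) →
        (∀ u ∈ B, Real.log Δ ^ 2 / 8 ≤ ((F.neighborSet u).ncard : ℝ)) →
        ∀ t : ℕ, t = ⌈(Δ : ℝ) ^ ((1 : ℝ) / 3)⌉₊ →
        ∃ c' : Sym2 V → ℕ,
          (∀ e ∈ F.edgeSet, 1 ≤ c' e ∧ c' e ≤ t) ∧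
          ∀ u ∈ B, ∀ v ∈ B, G.Adj u v →
            ((F.neighborSet u).ncard : ℝ) / 4 - 1 ≤
              (({x : V | x ∈ F.neighborSet u ∧ x ≠ v ∧
                  (∀ z : V, F.Adj u z → z ≠ x → c' s(u, x) ≠ c' s(u, z)) ∧
                  (∀ z : V, F.Adj x z → z ≠ u → c' s(u, x) ≠ c' s(x, z)) ∧
                  (∀ y : V, F.Adj v y → c' s(u, x) ≠ c' s(v, y))}).ncard : ℝ) := by
  classical
  refine ⟨⌈Real.exp 32⌉₊, ?_⟩
  intro Δ hΔ V _ G _ B F hFG hG hF hB t ht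
  have hΔ' : Real.exp 32 ≤ Δ := (Nat.le_ceil _).trans (by exact_mod_cast hΔ)
  have hΔ16 : (16 : ℝ) ≤ Δ := by linarith [Real.add_one_le_exp (32 : ℝ)]
  have hΔ0 : (0 : ℝ) < Δ := by linarith
  set L := Real.log Δ with hLdef
  have hL : 32 ≤ L := (Real.le_log_iff_exp_le hΔ0).2 hΔ'
  have hL2 : 0 < L ^ 2 := by positivity
  set r : ℝ := (Δ : ℝ) ^ ((1 : ℝ) / 3) with hr
  have hr0 : 0 < r := Real.rpow_pos_of_pos hΔ0 _
  have hrt : r ≤ t := by rw [ht]; exact Nat.le_ceil _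
  have ht0 : 0 < t := by
    have : (0 : ℝ) < t := hr0.trans_le hrt
    exact_mod_cast this
  set D : ℕ := ⌊2 * r / L ^ 2⌋₊ with hD
  have hDr : (D : ℝ) * L ^ 2 ≤ 2 * t := by
    have h1 : (D : ℝ) ≤ 2 * r / L ^ 2 := Nat.floor_le (by positivity)
    rw [le_div_iff₀ hL2] at h1
    linarith
  have hA : ∀ v, (edgesAt F v).card ≤ D := fun v => by
    rw [card_edgesAt]; exact Nat.le_floor (hF v)
  have hDt : 8 * D ≤ t := by
    have h3 : (1024 : ℝ) ≤ L ^ 2 := by nlinarith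
    have : (8 : ℝ) * D ≤ t := by
      linarith [mul_le_mul_of_nonneg_left h3 (Nat.cast_nonneg D : (0 : ℝ) ≤ D)]
    exact_mod_cast this
  set P : Finset (V × V) := univ.filter fun p => p.1 ∈ B ∧ p.2 ∈ B ∧ G.Adj p.1 p.2 with hP
  set k : V → ℕ := fun u => ((edgesAt F u).card + 1) / 2 with hk
  have hdeg : ∀ u ∈ B, L ^ 2 / 8 ≤ ((edgesAt F u).card : ℝ) := fun u hu => by
    rw [card_edgesAt]; exact hB u hu
  have hadj : ∀ e, ((univ.filter fun v => e ∈ edgesAt F v).biUnion (edgesAt F)).card ≤ 2 * D :=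
    fun e => (card_biUnion_le_card_mul _ _ _ fun v _ => hA v).trans
      (Nat.mul_le_mul_right _ (card_ends_le e))
  have hM : ∀ e, (P.filter fun p => e ∈ edgesAt F p.1 ∨ e ∈ edgesAt F p.2).card ≤ 4 * Δ := by
    intro e
    have hsub : (P.filter fun p => e ∈ edgesAt F p.1 ∨ e ∈ edgesAt F p.2) ⊆
        (univ.filter fun v => e ∈ edgesAt F v).biUnion fun w =>
          (G.neighborFinset w).image (fun x => (w, x)) ∪
            (G.neighborFinset w).image (fun x => (x, w)) := by
      rintro ⟨a, b⟩ hp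
      simp only [hP, mem_filter, mem_univ, true_and] at hp
      obtain ⟨⟨-, -, hab⟩, h | h⟩ := hp
      · refine mem_biUnion.2 ⟨a, by simpa using h, mem_union_left _ (mem_image.2 ⟨b, ?_, rfl⟩)⟩
        simpa using hab
      · refine mem_biUnion.2 ⟨b, by simpa using h, mem_union_right _ (mem_image.2 ⟨a, ?_, rfl⟩)⟩
        simpa using hab.symm
    refine (card_le_card hsub).trans ((card_biUnion_le_card_mul _ _ (2 * Δ) fun w _ => ?_).trans ?_)
    · refine (card_union_le _ _).trans ?_
      have h1 : (G.neighborFinset w).card ≤ Δ := hG w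
      have h2 := (card_image_le (s := G.neighborFinset w) (f := fun x => (w, x))).trans h1
      have h3 := (card_image_le (s := G.neighborFinset w) (f := fun x => (x, w))).trans h1
      omega
    · have := Nat.mul_le_mul_right (2 * Δ) (card_ends_le (F := F) e)
      linarith
  have hkpos : ∀ p ∈ P, 0 < k p.1 := by
    intro p hp
    have h1 := hdeg p.1 (mem_filter.1 hp).2.1
    have h2 : (0 : ℝ) < ((edgesAt F p.1).card : ℝ) := by linarith
    have h3 : 0 < (edgesAt F p.1).card := by exact_mod_cast h2
    simp only [hk]
    omega
  have hMq : ((4 * Δ : ℕ) : ℝ) * Real.exp (-(2 * L)) ≤ 1 / 4 := by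
    have : Real.exp (-(2 * L)) = ((Δ : ℝ) * Δ)⁻¹ := by
      rw [Real.exp_neg, two_mul, Real.exp_add, hLdef, Real.exp_log hΔ0]
    rw [this]
    push_cast
    rw [← div_eq_mul_inv, div_le_iff₀ (by positivity)]
    nlinarith
  obtain ⟨c, hproper, hpair⟩ := exists_valid (A := edgesAt F) (P := P) (k := k)
    ht0 hA hadj hM hDt hkpos
    (fun p hp => pair_share_le ht0 hL hDr (hdeg p.1 (mem_filter.1 hp).2.1))
    (Real.exp_pos _).le hMq
  have hinj : ∀ e f : Sym2 V, (c e : ℕ) + 1 = (c f : ℕ) + 1 → c e = c f :=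
    fun e f h => Fin.ext (Nat.succ_injective h)
  refine ⟨fun e => (c e : ℕ) + 1, fun e _ => ⟨Nat.succ_pos _, (c e).2⟩, ?_⟩
  intro u hu v hv huv
  -- The neighbours of `u` other than `v` whose edge has a colour seen at `v`.
  set Y : Finset V := ((univ.filter (F.Adj u)).erase v).filter
    fun x => c s(u, x) ∈ (edgesAt F v).image c with hY
  have hYk : Y.card < k u := by
    by_contra hcon
    rw [not_lt] at hcon
    obtain ⟨Z, hZY, hZk⟩ := exists_subset_card_eq hcon
    refine hpair (u, v) (by simp [hP, hu, hv, huv]) (Z.image fun x => s(u, x)) ?_ ?_ ?_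
    · intro e he
      obtain ⟨x, hx, rfl⟩ := mem_image.1 he
      have hx := hZY hx
      simp only [hY, mem_filter, mem_erase, mem_univ, true_and] at hx
      simp only [univ_inter, mem_sdiff]
      refine ⟨mk_mem_edgesAt hx.1.2, fun h => ?_⟩
      rcases Sym2.mem_iff.1 (mem_of_mem_edgesAt h) with h | h
      · exact huv.ne h.symm
      · exact hx.1.1 h.symm
    · rw [card_image_of_injective _ (mk_injective u), hZk]
    · intro e he
      obtain ⟨x, hx, rfl⟩ := mem_image.1 he
      rw [univ_inter]
      exact (mem_filter.1 (hZY hx)).2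
  set W : Finset V := ((univ.filter (F.Adj u)).erase v).filter
    fun x => c s(u, x) ∉ (edgesAt F v).image c with hW
  have hsum : Y.card + W.card = ((univ.filter (F.Adj u)).erase v).card :=
    card_filter_add_card_filter_not _
  have hd : (univ.filter (F.Adj u)).card = (edgesAt F u).card :=
    (card_image_of_injective _ (mk_injective u)).symm
  have hpred := pred_card_le_card_erase (s := univ.filter (F.Adj u)) (a := v)
  have hWcard : (edgesAt F u).card ≤ 2 * W.card + 1 := by
    simp only [hk] at hYk
    omega
  have hWsub : (W : Set V) ⊆ {x : V | x ∈ F.neighborSet u ∧ x ≠ v ∧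
      (∀ z : V, F.Adj u z → z ≠ x → (c s(u, x) : ℕ) + 1 ≠ (c s(u, z) : ℕ) + 1) ∧
      (∀ z : V, F.Adj x z → z ≠ u → (c s(u, x) : ℕ) + 1 ≠ (c s(x, z) : ℕ) + 1) ∧
      (∀ y : V, F.Adj v y → (c s(u, x) : ℕ) + 1 ≠ (c s(v, y) : ℕ) + 1)} := by
    intro x hx
    simp only [hW, coe_filter, mem_erase, mem_filter, mem_univ, true_and,
      Set.mem_ofPred_eq] at hx
    obtain ⟨⟨hxv, hux⟩, hxc⟩ := hx
    refine ⟨hux, hxv, fun z hz hzx h => ?_, fun z hz hzu h => ?_, fun y hy h => ?_⟩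
    · exact hproper u _ (mem_univ _) _ (mem_univ _) (mk_mem_edgesAt hux) (mk_mem_edgesAt hz)
        (fun h => hzx (mk_injective u h).symm) (hinj _ _ h)
    · refine hproper x _ (mem_univ _) _ (mem_univ _) (mk_mem_edgesAt_right hux)
        (mk_mem_edgesAt hz) (fun h => hzu ?_) (hinj _ _ h)
      rw [Sym2.eq_swap] at h
      exact (mk_injective x h).symm
    · exact hxc (mem_image.2 ⟨_, mk_mem_edgesAt hy, (hinj _ _ h).symm⟩)
  have hfin := Set.ncard_le_ncard hWsub (Set.toFinite _)
  rw [Set.ncard_coe_finset] at hfin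
  have hfin' : (W.card : ℝ) ≤ _ := Nat.cast_le.2 hfin
  refine le_trans ?_ hfin'
  rw [← card_edgesAt]
  have : ((edgesAt F u).card : ℝ) ≤ 2 * W.card + 1 := by exact_mod_cast hWcard
  have hW0 : (0 : ℝ) ≤ W.card := Nat.cast_nonneg _
  linarith
end

section
/- A graph G admits an inclusion-free proper edge colouring if and only if G has no vertex of degree exactly 1. -/
theorem inclusion_free_coloring_exists_iff {V : Type*} [Fintype V]
    (G : SimpleGraph V) [DecidableRel G.Adj] :
    (∃ c : Sym2 V → ℕ, IsInclusionFree G c) ↔ ∀ v : V, G.degree v ≠ 1 := by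
  constructor
  · rintro ⟨c, -, hc⟩ v hv
    obtain ⟨w, hw, huniq⟩ := G.degree_eq_one_iff_existsUnique_adj.mp hv
    refine hc v w hw ?_
    rintro n ⟨u, hu, rfl⟩
    obtain rfl := huniq u hu
    exact ⟨v, hw.symm, by rw [Sym2.eq_swap]⟩
  · intro h
    have : Finite (Sym2 V) := Quot.finite _
    obtain ⟨c, hc⟩ := exists_injective_nat (Sym2 V)
    refine ⟨c, ?_, ?_⟩
    · intro u v w _ _ hvw he
      exact hvw (Sym2.congr_right.mp (hc he))
    · intro u v huv hsub
      obtain ⟨w, hw, hwv⟩ : ∃ w, G.Adj u w ∧ w ≠ v := by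
        by_contra! hcon
        exact h u (G.degree_eq_one_iff_existsUnique_adj.mpr ⟨v, huv, hcon⟩)
      obtain ⟨x, -, hx⟩ := hsub ⟨w, hw, rfl⟩
      have hv : v ∈ s(u, w) := hc hx ▸ Sym2.mem_mk_left v x
      rcases Sym2.mem_iff.mp hv with rfl | rfl
      · exact G.irrefl huv
      · exact hwv rfl
end
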